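/- arXiv:2312.06541 — 6 statements merged into one kernel-verified Lean document; each statement's English description precedes it below -/
import Mathlib

section
/- Let n ≥ 1, 0 < α ≤ 1, and let f, g : ℝ^n → ℝ be bounded with [f]_α, [g]_α < ∞. Then there is a constant C, depending only on n, α and the mollifier φ, such that for every ε > 0 one has ‖(fg)*φ_ε − (f*φ_ε)(g*φ_ε)‖₀ ≤ C ε^{2α} ‖f‖_α ‖g‖_α. -/
open MeasureTheory Metric

/-- Mollification `f * φ_ε` of a real-valued function on `ℝ^n`, where
`φ_ε(y) = ε^{-n} φ(y/ε)`. -/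
noncomputable def mollify (n : ℕ) (φ : EuclideanSpace ℝ (Fin n) → ℝ) (ε : ℝ)
    (f : EuclideanSpace ℝ (Fin n) → ℝ) (x : EuclideanSpace ℝ (Fin n)) : ℝ :=
  ∫ y, f (x - y) * ((ε ^ n)⁻¹ * φ (ε⁻¹ • y))

/-- A weighted covariance is controlled by the oscillations of the two factors around arbitrary
constants on the support of the weight. -/
theorem abs_integral_mul_sub_mul_integral_le {X : Type*} [MeasurableSpace X] {μ : Measure X}
    {w F G : X → ℝ} {c d A B : ℝ} (hw : ∀ y, 0 ≤ w y) (hw_int : Integrable w μ)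
    (hw_one : ∫ y, w y ∂μ = 1) (hF : Integrable (fun y => F y * w y) μ)
    (hG : Integrable (fun y => G y * w y) μ) (hFG : Integrable (fun y => F y * G y * w y) μ)
    (hA : 0 ≤ A) (hFc : ∀ y, w y ≠ 0 → |F y - c| ≤ A) (hGd : ∀ y, w y ≠ 0 → |G y - d| ≤ B) :
    |∫ y, F y * G y * w y ∂μ - (∫ y, F y * w y ∂μ) * ∫ y, G y * w y ∂μ| ≤ 2 * (A * B) := by
  have bound : ∀ (H : X → ℝ) (K : ℝ), (∀ y, w y ≠ 0 → |H y| ≤ K) →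
      |∫ y, H y * w y ∂μ| ≤ K := by
    intro H K hH
    have h := norm_integral_le_of_norm_le (hw_int.const_mul K) (f := fun y => H y * w y)
      (Filter.Eventually.of_forall fun y => by
        rcases eq_or_ne (w y) 0 with h0 | h0
        · simp [h0]
        · rw [Real.norm_eq_abs, abs_mul, abs_of_nonneg (hw y)]
          exact mul_le_mul_of_nonneg_right (hH y h0) (hw y))
    rwa [integral_const_mul, hw_one, mul_one, Real.norm_eq_abs] at h
  have centered : ∀ (H : X → ℝ) (k : ℝ), Integrable (fun y => H y * w y) μ →
      ∫ y, (H y - k) * w y ∂μ = ∫ y, H y * w y ∂μ - k := by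
    intro H k hH
    simp_rw [sub_mul]
    rw [integral_sub hH (hw_int.const_mul k), integral_const_mul, hw_one, mul_one]
  have product : ∫ y, (F y - c) * (G y - d) * w y ∂μ = ∫ y, F y * G y * w y ∂μ
      - d * ∫ y, F y * w y ∂μ - c * (∫ y, G y * w y ∂μ - d) := by
    rw [← centered G d hG, ← integral_const_mul, ← integral_const_mul,
      ← integral_sub hFG (hF.const_mul d),
      ← integral_sub (f := fun y => F y * G y * w y - d * (F y * w y))
        (hFG.sub (hF.const_mul d))]
    · exact integral_congr_ae (Filter.Eventually.of_forall fun y => by ring)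
    · refine Integrable.const_mul ?_ c
      simp only [sub_mul]
      exact hG.sub (hw_int.const_mul d)
  have h₁ := bound _ _ hFc
  have h₂ := bound _ _ hGd
  have h₃ := bound (fun y => (F y - c) * (G y - d)) (A * B) fun y hy => by
    rw [abs_mul]
    exact mul_le_mul (hFc y hy) (hGd y hy) (abs_nonneg _) hA
  rw [centered F c hF] at h₁
  rw [centered G d hG] at h₂
  rw [product] at h₃
  have h₄ := mul_le_mul h₁ h₂ (abs_nonneg _) hA
  rw [← abs_mul] at h₄
  calc _ = |(∫ y, F y * G y * w y ∂μ - d * ∫ y, F y * w y ∂μ - c * (∫ y, G y * w y ∂μ - d))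
        - (∫ y, F y * w y ∂μ - c) * (∫ y, G y * w y ∂μ - d)| := by congr 1; ring
    _ ≤ _ := (abs_sub _ _).trans (by linarith)

/-- A real function with a Hölder modulus of positive exponent is continuous. -/
theorem continuous_of_abs_sub_le_mul_rpow {E : Type*} [SeminormedAddCommGroup E] {f : E → ℝ}
    {M α : ℝ} (hα : 0 < α) (hf : ∀ x y, |f x - f y| ≤ M * ‖x - y‖ ^ α) : Continuous f := by
  refine continuous_iff_continuousAt.2 fun x => tendsto_iff_norm_sub_tendsto_zero.2 ?_
  refine squeeze_zero (fun _ => norm_nonneg _) (fun y => hf y x) ?_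
  have h : Continuous fun y : E => M * ‖y - x‖ ^ α :=
    continuous_const.mul ((continuous_id.sub continuous_const).norm.rpow_const
      fun _ => Or.inr hα.le)
  simpa [Real.zero_rpow hα.ne'] using h.tendsto x

/-- A Hölder constant on a nontrivial normed space is nonnegative. -/
theorem nonneg_of_abs_sub_le_mul_rpow {E : Type*} [NormedAddCommGroup E] [Nontrivial E]
    {f : E → ℝ} {M α : ℝ} (hf : ∀ x y, |f x - f y| ≤ M * ‖x - y‖ ^ α) : 0 ≤ M := by
  obtain ⟨x, y, hxy⟩ := exists_pair_ne E
  exact nonneg_of_mul_nonneg_left ((abs_nonneg _).trans (hf x y))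
    (Real.rpow_pos_of_pos (norm_pos_iff.2 (sub_ne_zero.2 hxy)) α)

/-- the commutator estimate
`‖(fg)*φ_ε − (f*φ_ε)(g*φ_ε)‖₀ ≤ C ε^{2α} ‖f‖_α ‖g‖_α`, with a constant `C = C(n, α, φ)`. -/
theorem mollification_commutator_sup_estimate
    (n : ℕ) (hn : 1 ≤ n) (α : ℝ) (hα0 : 0 < α) (hα1 : α ≤ 1)
    (φ : EuclideanSpace ℝ (Fin n) → ℝ)
    (hφ_smooth : ContDiff ℝ (⊤ : ℕ∞) φ)
    (hφ_supp : Function.support φ ⊆ Metric.closedBall 0 1)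
    (hφ_nonneg : ∀ x, 0 ≤ φ x)
    (hφ_int : ∫ x, φ x = 1) :
    ∃ C : ℝ, 0 < C ∧
      ∀ (f g : EuclideanSpace ℝ (Fin n) → ℝ) (Mf₀ Mfα Mg₀ Mgα : ℝ),
        (∀ x, |f x| ≤ Mf₀) →
        (∀ x y, |f x - f y| ≤ Mfα * ‖x - y‖ ^ α) →
        (∀ x, |g x| ≤ Mg₀) →
        (∀ x y, |g x - g y| ≤ Mgα * ‖x - y‖ ^ α) →
        ∀ ε : ℝ, 0 < ε →
          ∀ x, |mollify n φ ε (fun z => f z * g z) x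
                  - mollify n φ ε f x * mollify n φ ε g x|
              ≤ C * ε ^ (2 * α) * ((Mf₀ + Mfα) * (Mg₀ + Mgα)) := by
  refine ⟨2, two_pos, fun f g Mf₀ Mfα Mg₀ Mgα hf₀ hf hg₀ hg ε hε x => ?_⟩
  have : Nonempty (Fin n) := ⟨⟨0, hn⟩⟩
  have hMf := nonneg_of_abs_sub_le_mul_rpow hf
  have hMg := nonneg_of_abs_sub_le_mul_rpow hg
  have hMf₀ := (abs_nonneg _).trans (hf₀ 0)
  have hMg₀ := (abs_nonneg _).trans (hg₀ 0)
  have hf_cont : Continuous fun y => f (x - y) :=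
    (continuous_of_abs_sub_le_mul_rpow hα0 hf).comp (continuous_const.sub continuous_id)
  have hg_cont : Continuous fun y => g (x - y) :=
    (continuous_of_abs_sub_le_mul_rpow hα0 hg).comp (continuous_const.sub continuous_id)
  set w : EuclideanSpace ℝ (Fin n) → ℝ := fun y => (ε ^ n)⁻¹ * φ (ε⁻¹ • y) with hw
  have hw_cont : Continuous w :=
    continuous_const.mul (hφ_smooth.continuous.comp (continuous_const_smul _))
  have hw_norm : ∀ y, w y ≠ 0 → ‖y‖ ≤ ε := by
    intro y hy
    have h := hφ_supp (right_ne_zero_of_mul hy : φ (ε⁻¹ • y) ≠ 0)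
    rw [mem_closedBall_zero_iff, norm_smul, Real.norm_of_nonneg (inv_nonneg.2 hε.le),
      inv_mul_le_iff₀ hε, mul_one] at h
    exact h
  have hw_supp : HasCompactSupport w :=
    HasCompactSupport.intro (isCompact_closedBall 0 ε) fun y hy => by
      by_contra h
      exact hy (mem_closedBall_zero_iff.2 (hw_norm y h))
  have hw_one : ∫ y, w y = 1 := by
    rw [hw, integral_const_mul, Measure.integral_comp_inv_smul_of_nonneg _ _ hε.le, hφ_int,
      finrank_euclideanSpace_fin, smul_eq_mul, mul_one, inv_mul_cancel₀ (pow_pos hε n).ne']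
  have osc : ∀ (h : EuclideanSpace ℝ (Fin n) → ℝ) (M : ℝ), 0 ≤ M →
      (∀ x y, |h x - h y| ≤ M * ‖x - y‖ ^ α) →
      ∀ y, w y ≠ 0 → |h (x - y) - h x| ≤ M * ε ^ α := by
    intro h M hM hh y hy
    refine (hh _ _).trans (mul_le_mul_of_nonneg_left ?_ hM)
    rw [sub_sub_cancel_left, norm_neg]
    exact Real.rpow_le_rpow (norm_nonneg _) (hw_norm y hy) hα0.le
  have key := abs_integral_mul_sub_mul_integral_le (μ := volume) (w := w)
    (fun y => mul_nonneg (inv_nonneg.2 (pow_nonneg hε.le n)) (hφ_nonneg _))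
    (hw_cont.integrable_of_hasCompactSupport hw_supp) hw_one
    ((hf_cont.mul hw_cont).integrable_of_hasCompactSupport hw_supp.mul_left)
    ((hg_cont.mul hw_cont).integrable_of_hasCompactSupport hw_supp.mul_left)
    (((hf_cont.mul hg_cont).mul hw_cont).integrable_of_hasCompactSupport hw_supp.mul_left)
    (mul_nonneg hMf (Real.rpow_nonneg hε.le α)) (osc f Mfα hMf hf) (osc g Mgα hMg hg)
  refine key.trans ?_
  rw [two_mul α, Real.rpow_add hε]
  calc 2 * (Mfα * ε ^ α * (Mgα * ε ^ α)) = 2 * (ε ^ α * ε ^ α) * (Mfα * Mgα) := by ring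
    _ ≤ _ := by gcongr <;> linarith
end

section
/- Let n ≥ 1, 0 < α ≤ 1, and let f, g : ℝ^n → ℝ be bounded with [f]_α, [g]_α < ∞. Then there is a constant C, depending only on n, α and the mollifier φ, such that for every ε ∈ (0,1] and every k ∈ {1,…,n} one has ‖∂_k[(fg)*φ_ε − (f*φ_ε)(g*φ_ε)]‖₀ ≤ C ε^{2α−1} ‖f‖_α ‖g‖_α. -/
open MeasureTheory Metric

/-- A Hölder bound of positive exponent forces continuity. -/
theorem continuous_of_holder_bound {E : Type*} [NormedAddCommGroup E] {f : E → ℝ} {M α : ℝ}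
    (hα : 0 < α) (hf : ∀ x y, |f x - f y| ≤ M * ‖x - y‖ ^ α) : Continuous f := by
  refine continuous_iff_continuousAt.2 fun x => ?_
  rw [ContinuousAt, tendsto_iff_norm_sub_tendsto_zero]
  have hlim : Filter.Tendsto (fun y => M * ‖y - x‖ ^ α) (nhds x) (nhds 0) := by
    have hcont : Continuous fun y => M * ‖y - x‖ ^ α :=
      continuous_const.mul ((continuous_id.sub continuous_const).norm.rpow_const
        fun _ => Or.inr hα.le)
    simpa [Real.zero_rpow hα.ne'] using hcont.tendsto x
  exact squeeze_zero (fun _ => norm_nonneg _) (fun y => hf y x) hlim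

/-- An average against a probability density is bounded by the local sup of the function. -/
theorem abs_integral_sub_mul_le {E : Type*} [NormedAddCommGroup E] [MeasurableSpace E]
    {μ : Measure E} {w H : E → ℝ} {r S : ℝ} {x : E}
    (hwi : Integrable w μ) (hsupp : Function.support w ⊆ closedBall 0 r)
    (hw0 : ∀ y, 0 ≤ w y) (hw1 : ∫ y, w y ∂μ = 1)
    (hS : ∀ y ∈ closedBall (0 : E) r, |H (x - y)| ≤ S) :
    |∫ y, H (x - y) * w y ∂μ| ≤ S := by
  calc |∫ y, H (x - y) * w y ∂μ| ≤ ∫ y, S * w y ∂μ := by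
        rw [← Real.norm_eq_abs]
        refine norm_integral_le_of_norm_le (hwi.const_mul S)
          (Filter.Eventually.of_forall fun y => ?_)
        by_cases hy : y ∈ closedBall (0 : E) r
        · rw [Real.norm_eq_abs, abs_mul, abs_of_nonneg (hw0 y)]
          exact mul_le_mul_of_nonneg_right (hS y hy) (hw0 y)
        · have hzero : w y = 0 := by
            by_contra h
            exact hy (hsupp h)
          simp [hzero]
    _ = S := by rw [integral_const_mul, hw1, mul_one]

/-- The commutator of averaging and multiplication does not change when constants are subtracted
from the factors. -/
theorem integral_commutator_sub_const {E : Type*} [NormedAddCommGroup E] [MeasurableSpace E]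
    [BorelSpace E] {μ : Measure E} [IsFiniteMeasureOnCompacts μ] {w f g : E → ℝ} (a b : ℝ)
    (hw : Continuous w) (hcw : HasCompactSupport w) (hw1 : ∫ y, w y ∂μ = 1)
    (hf : Continuous f) (hg : Continuous g) (z : E) :
    (∫ y, (f (z - y) - a) * (g (z - y) - b) * w y ∂μ)
        - (∫ y, (f (z - y) - a) * w y ∂μ) * (∫ y, (g (z - y) - b) * w y ∂μ)
      = (∫ y, f (z - y) * g (z - y) * w y ∂μ)
        - (∫ y, f (z - y) * w y ∂μ) * (∫ y, g (z - y) * w y ∂μ) := by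
  have hprod : ∀ h : E → ℝ, Continuous h → Integrable (fun y => h (z - y) * w y) μ := fun h hh =>
    ((hh.comp (continuous_const.sub continuous_id)).mul hw).integrable_of_hasCompactSupport
      hcw.mul_left
  have hwi : Integrable w μ := hw.integrable_of_hasCompactSupport hcw
  have hsub : ∀ (h : E → ℝ) (c : ℝ), Continuous h →
      ∫ y, (h (z - y) - c) * w y ∂μ = (∫ y, h (z - y) * w y ∂μ) - c := by
    intro h c hh
    simp_rw [sub_mul]
    rw [integral_sub (hprod h hh) (hwi.const_mul c), integral_const_mul, hw1, mul_one]
  have hexpand : ∫ y, (f (z - y) - a) * (g (z - y) - b) * w y ∂μ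
      = (∫ y, f (z - y) * g (z - y) * w y ∂μ) - b * (∫ y, f (z - y) * w y ∂μ)
        - a * ((∫ y, g (z - y) * w y ∂μ) - b) := by
    have hfun : ∀ y, (f (z - y) - a) * (g (z - y) - b) * w y
        = f (z - y) * g (z - y) * w y - b * (f (z - y) * w y)
          - a * ((g (z - y) - b) * w y) := fun y => by ring
    simp_rw [hfun]
    have hfg := hprod (fun y => f y * g y) (hf.mul hg)
    have hfg' : Integrable
        (fun y => f (z - y) * g (z - y) * w y - b * (f (z - y) * w y)) μ :=
      hfg.sub ((hprod f hf).const_mul b)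
    rw [integral_sub hfg'
        ((hprod (fun y => g y - b) (hg.sub continuous_const)).const_mul a),
      integral_sub hfg ((hprod f hf).const_mul b), integral_const_mul, integral_const_mul,
      hsub g b hg]
  rw [hexpand, hsub f a hf, hsub g b hg]
  ring

section Convolution

variable {E : Type*} [NormedAddCommGroup E] [NormedSpace ℝ E] [FiniteDimensional ℝ E]
  [MeasurableSpace E] [BorelSpace E] {μ : Measure E} [μ.IsAddHaarMeasure]

/-- Convolution with a compactly supported `C¹` kernel is differentiable, and its derivative is
bounded by the `L¹` norm of the derivative of the kernel times the local sup of the function. -/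
theorem exists_hasFDerivAt_integral_sub_mul {w H : E → ℝ} {r S : ℝ} {x : E}
    (hw : ContDiff ℝ 1 w) (hsupp : Function.support w ⊆ closedBall 0 r) (hH : Continuous H)
    (hS : ∀ y ∈ closedBall (0 : E) r, |H (x - y)| ≤ S) :
    ∃ D : E →L[ℝ] ℝ, HasFDerivAt (fun z => ∫ y, H (z - y) * w y ∂μ) D x ∧
      ‖D‖ ≤ (∫ y, ‖fderiv ℝ w y‖ ∂μ) * S := by
  have htsupp : tsupport w ⊆ closedBall 0 r := closure_minimal hsupp isClosed_closedBall
  have hcw : HasCompactSupport w :=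
    HasCompactSupport.of_support_subset_isCompact (isCompact_closedBall 0 r) hsupp
  have hder := hcw.hasFDerivAt_convolution_left (μ := μ) (ContinuousLinearMap.mul ℝ ℝ) hw
    hH.locallyIntegrable x
  have hfun : (fun z => ∫ y, H (z - y) * w y ∂μ)
      = convolution w H (ContinuousLinearMap.mul ℝ ℝ) μ := by
    ext z
    simp [convolution, mul_comm]
  refine ⟨_, hfun ▸ hder, ?_⟩
  rw [convolution_def, ← integral_mul_const]
  refine norm_integral_le_of_norm_le
    ((((hw.continuous_fderiv one_ne_zero).norm).integrable_of_hasCompactSupport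
      (hcw.fderiv ℝ).norm).mul_const S) (Filter.Eventually.of_forall fun y => ?_)
  by_cases hy : y ∈ closedBall (0 : E) r
  · have hsmul : (ContinuousLinearMap.mul ℝ ℝ).precompL E (fderiv ℝ w y) (H (x - y))
        = H (x - y) • fderiv ℝ w y := by
      ext v
      simp [ContinuousLinearMap.precompL_apply, mul_comm]
    rw [hsmul, norm_smul, mul_comm]
    exact mul_le_mul_of_nonneg_left (hS y hy) (norm_nonneg _)
  · have hzero : fderiv ℝ w y = 0 :=
      image_eq_zero_of_notMem_tsupport fun h =>
        hy (htsupp (tsupport_fderiv_subset ℝ h))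
    simp [hzero]

/-- Commutator estimate for a general `C¹` probability density supported in a ball, in terms of
the oscillations of the two factors on that ball. -/
theorem norm_fderiv_integral_commutator_le {w f g : E → ℝ} {r A B : ℝ} {x : E}
    (hw : ContDiff ℝ 1 w) (hsupp : Function.support w ⊆ closedBall 0 r)
    (hw0 : ∀ y, 0 ≤ w y) (hw1 : ∫ y, w y ∂μ = 1)
    (hf : Continuous f) (hg : Continuous g) (hA0 : 0 ≤ A) (hB0 : 0 ≤ B)
    (hA : ∀ y ∈ closedBall (0 : E) r, |f (x - y) - f x| ≤ A)
    (hB : ∀ y ∈ closedBall (0 : E) r, |g (x - y) - g x| ≤ B) :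
    ‖fderiv ℝ (fun z => (∫ y, f (z - y) * g (z - y) * w y ∂μ)
        - (∫ y, f (z - y) * w y ∂μ) * (∫ y, g (z - y) * w y ∂μ)) x‖
      ≤ 3 * (∫ y, ‖fderiv ℝ w y‖ ∂μ) * (A * B) := by
  have hcw : HasCompactSupport w :=
    HasCompactSupport.of_support_subset_isCompact (isCompact_closedBall 0 r) hsupp
  have hwi : Integrable w μ := hw.continuous.integrable_of_hasCompactSupport hcw
  have hF : Continuous fun y => f y - f x := hf.sub continuous_const
  have hG : Continuous fun y => g y - g x := hg.sub continuous_const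
  obtain ⟨D, hD, hDn⟩ := exists_hasFDerivAt_integral_sub_mul (μ := μ) (S := A * B) hw hsupp
    (hF.mul hG) fun y hy => by
      rw [Pi.mul_apply, abs_mul]
      exact mul_le_mul (hA y hy) (hB y hy) (abs_nonneg _) hA0
  obtain ⟨P, hP, hPn⟩ := exists_hasFDerivAt_integral_sub_mul (μ := μ) hw hsupp hF hA
  obtain ⟨Q, hQ, hQn⟩ := exists_hasFDerivAt_integral_sub_mul (μ := μ) hw hsupp hG hB
  have hu := abs_integral_sub_mul_le (H := fun y => f y - f x) hwi hsupp hw0 hw1 hA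
  have hv := abs_integral_sub_mul_le (H := fun y => g y - g x) hwi hsupp hw0 hw1 hB
  simp_rw [← integral_commutator_sub_const (f x) (g x) hw.continuous hcw hw1 hf hg]
  have hder := hD.sub (hP.mul hQ)
  refine (congrArg norm hder.fderiv).trans_le ?_
  have hK : 0 ≤ ∫ y, ‖fderiv ℝ w y‖ ∂μ := integral_nonneg fun _ => norm_nonneg _
  refine (norm_sub_le _ _).trans ((add_le_add_right (norm_add_le _ _) _).trans ?_)
  rw [norm_smul, norm_smul, Real.norm_eq_abs, Real.norm_eq_abs]
  have h₁ := mul_le_mul hu hQn (norm_nonneg _) hA0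
  have h₂ := mul_le_mul hv hPn (norm_nonneg _) hB0
  linarith

/-- The rescaled kernel keeps its mass. -/
theorem integral_rescaled_kernel (φ : E → ℝ) {ε : ℝ} (hε : 0 < ε) :
    ∫ y, (ε ^ Module.finrank ℝ E)⁻¹ * φ (ε⁻¹ • y) ∂μ = ∫ y, φ y ∂μ := by
  have hpow : 0 < ε ^ Module.finrank ℝ E := by positivity
  rw [integral_const_mul, Measure.integral_comp_inv_smul, abs_of_pos hpow, smul_eq_mul,
    inv_mul_cancel_left₀ hpow.ne']

/-- The `L¹` norm of the derivative of the rescaled kernel scales like `ε⁻¹`. -/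
theorem integral_norm_fderiv_rescaled_kernel {φ : E → ℝ} (hφ : Differentiable ℝ φ) {ε : ℝ}
    (hε : 0 < ε) :
    ∫ y, ‖fderiv ℝ (fun y => (ε ^ Module.finrank ℝ E)⁻¹ * φ (ε⁻¹ • y)) y‖ ∂μ
      = ε⁻¹ * ∫ y, ‖fderiv ℝ φ y‖ ∂μ := by
  have hpt : ∀ y, ‖fderiv ℝ (fun y => (ε ^ Module.finrank ℝ E)⁻¹ * φ (ε⁻¹ • y)) y‖
      = (ε ^ Module.finrank ℝ E)⁻¹ * (ε⁻¹ * ‖fderiv ℝ φ (ε⁻¹ • y)‖) := fun y => by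
    have hd : DifferentiableAt ℝ (fun y => φ (ε⁻¹ • y)) y :=
      (hφ _).comp y (differentiableAt_id.const_smul ε⁻¹)
    rw [fderiv_const_mul hd, fderiv_comp_smul, norm_smul, norm_smul,
      Real.norm_of_nonneg (by positivity), Real.norm_of_nonneg (by positivity)]
  simp_rw [hpt]
  rw [integral_rescaled_kernel (fun y => ε⁻¹ * ‖fderiv ℝ φ y‖) hε, integral_const_mul]

end Convolution

/-- the first-derivative commutator estimate
`‖∂_k[(fg)*φ_ε − (f*φ_ε)(g*φ_ε)]‖₀ ≤ C ε^{2α-1} ‖f‖_α ‖g‖_α` for `ε ∈ (0,1]` and every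
coordinate direction `k`, with a constant `C = C(n, α, φ)`.  Here the partial derivative
`∂_k` is the classical partial derivative, expressed as the Fréchet derivative applied to
the `k`-th standard basis vector. -/
theorem mollification_commutator_deriv_estimate
    (n : ℕ) (hn : 1 ≤ n) (α : ℝ) (hα0 : 0 < α) (hα1 : α ≤ 1)
    (φ : EuclideanSpace ℝ (Fin n) → ℝ)
    (hφ_smooth : ContDiff ℝ (⊤ : ℕ∞) φ)
    (hφ_supp : Function.support φ ⊆ Metric.closedBall 0 1)
    (hφ_nonneg : ∀ x, 0 ≤ φ x)
    (hφ_int : ∫ x, φ x = 1) :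
    ∃ C : ℝ, 0 < C ∧
      ∀ (f g : EuclideanSpace ℝ (Fin n) → ℝ) (Mf₀ Mfα Mg₀ Mgα : ℝ),
        (∀ x, |f x| ≤ Mf₀) →
        (∀ x y, |f x - f y| ≤ Mfα * ‖x - y‖ ^ α) →
        (∀ x, |g x| ≤ Mg₀) →
        (∀ x y, |g x - g y| ≤ Mgα * ‖x - y‖ ^ α) →
        ∀ ε : ℝ, 0 < ε → ε ≤ 1 →
          ∀ (k : Fin n) (x : EuclideanSpace ℝ (Fin n)),
            |fderiv ℝ (fun z => mollify n φ ε (fun w => f w * g w) z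
                - mollify n φ ε f z * mollify n φ ε g z) x (EuclideanSpace.single k 1)|
              ≤ C * ε ^ (2 * α - 1) * ((Mf₀ + Mfα) * (Mg₀ + Mgα)) := by
  set K : ℝ := ∫ y, ‖fderiv ℝ φ y‖
  have hK : 0 ≤ K := integral_nonneg fun _ => norm_nonneg _
  refine ⟨3 * K + 1, by positivity, ?_⟩
  intro f g Mf₀ Mfα Mg₀ Mgα hf₀ hfα hg₀ hgα ε hε _ k x
  have hseminorm : ∀ (h : EuclideanSpace ℝ (Fin n) → ℝ) (M : ℝ),
      (∀ x y, |h x - h y| ≤ M * ‖x - y‖ ^ α) → 0 ≤ M := fun h M hM => by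
    have hle := (abs_nonneg _).trans (hM (EuclideanSpace.single k 1) 0)
    simpa using hle
  have hMf := hseminorm f Mfα hfα
  have hMg := hseminorm g Mgα hgα
  have hMf₀ : 0 ≤ Mf₀ := (abs_nonneg _).trans (hf₀ 0)
  have hMg₀ : 0 ≤ Mg₀ := (abs_nonneg _).trans (hg₀ 0)
  have hrank : Module.finrank ℝ (EuclideanSpace ℝ (Fin n)) = n := by simp
  have hdiff : ContDiff ℝ 1 φ := hφ_smooth.of_le (by exact_mod_cast le_top)
  set w : EuclideanSpace ℝ (Fin n) → ℝ := fun y => (ε ^ n)⁻¹ * φ (ε⁻¹ • y)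
  have hw : ContDiff ℝ 1 w := contDiff_const.mul (hdiff.comp (contDiff_const_smul ε⁻¹))
  have hw0 : ∀ y, 0 ≤ w y := fun y => mul_nonneg (by positivity) (hφ_nonneg _)
  have hsupp : Function.support w ⊆ closedBall 0 ε := by
    intro y hy
    have hmem := hφ_supp (right_ne_zero_of_mul hy : φ (ε⁻¹ • y) ≠ 0)
    rw [mem_closedBall_zero_iff, norm_smul, norm_inv, Real.norm_of_nonneg hε.le,
      inv_mul_le_iff₀ hε, mul_one] at hmem
    exact mem_closedBall_zero_iff.2 hmem
  have hw1 : ∫ y, w y = 1 := by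
    have hmass := integral_rescaled_kernel (μ := volume) φ hε
    rwa [hrank, hφ_int] at hmass
  have hwK : ∫ y, ‖fderiv ℝ w y‖ = ε⁻¹ * K := by
    have hscale := integral_norm_fderiv_rescaled_kernel (μ := volume)
      (hdiff.differentiable one_ne_zero) hε
    rwa [hrank] at hscale
  have hosc : ∀ (h : EuclideanSpace ℝ (Fin n) → ℝ) (M : ℝ), 0 ≤ M →
      (∀ x y, |h x - h y| ≤ M * ‖x - y‖ ^ α) →
      ∀ y ∈ closedBall (0 : EuclideanSpace ℝ (Fin n)) ε, |h (x - y) - h x| ≤ M * ε ^ α := by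
    intro h M hM hh y hy
    refine (hh _ _).trans ?_
    rw [sub_sub_cancel_left, norm_neg]
    have hnorm := mem_closedBall_zero_iff.1 hy
    gcongr
  have hmain := norm_fderiv_integral_commutator_le (μ := volume) hw hsupp hw0 hw1
    (continuous_of_holder_bound hα0 hfα) (continuous_of_holder_bound hα0 hgα)
    (by positivity) (by positivity) (hosc f Mfα hMf hfα) (hosc g Mgα hMg hgα)
  rw [hwK] at hmain
  have hpow : ε ^ (2 * α - 1) = ε⁻¹ * (ε ^ α * ε ^ α) := by
    rw [Real.rpow_sub_one hε.ne', two_mul, Real.rpow_add hε]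
    ring
  calc _ ≤ 3 * (ε⁻¹ * K) * (Mfα * ε ^ α * (Mgα * ε ^ α)) := by
        rw [← Real.norm_eq_abs]
        refine (ContinuousLinearMap.le_opNorm _ _).trans ?_
        rw [PiLp.norm_single, norm_one, mul_one]
        exact hmain
    _ = 3 * K * ε ^ (2 * α - 1) * (Mfα * Mgα) := by
        rw [hpow]
        ring
    _ ≤ (3 * K + 1) * ε ^ (2 * α - 1) * ((Mf₀ + Mfα) * (Mg₀ + Mgα)) := by
        gcongr <;> linarith
end

section
/- Let Ω ⊆ ℝ^n be open, 0 < α ≤ 1, and let u : Ω → ℝ^q be a C^{1,α} immersion whose pullback metric g = (Du)ᵀDu is of class C² on Ω. Let K ⊂ Ω be compact and let r > 0 be such that the closed r-neighborhood K_r of K is contained in Ω. Then there is a constant C, depending only on n, q, α, the mollifier φ, ‖u‖_{C^{1,α}(K_r)} and ‖g‖_{C²(K_r)}, such that for every ε ∈ (0, min(r,1)) one has ‖g − (D(u*φ_ε))ᵀ D(u*φ_ε)‖_{C¹(K)} ≤ C ε^{2α−1}, where the C¹ norm on K is the sup on K of the matrix field and of all its first partial derivatives. -/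
open MeasureTheory Metric Function

/-- Mollification `u * φ_ε` of an `ℝ^q`-valued map on `ℝ^n`, where
`φ_ε(y) = ε^{-n} φ(y/ε)`, applied componentwise. -/
noncomputable def mollifyV (n q : ℕ) (φ : EuclideanSpace ℝ (Fin n) → ℝ) (ε : ℝ)
    (u : EuclideanSpace ℝ (Fin n) → EuclideanSpace ℝ (Fin q))
    (x : EuclideanSpace ℝ (Fin n)) : EuclideanSpace ℝ (Fin q) :=
  ∫ y, ((ε ^ n)⁻¹ * φ (ε⁻¹ • y)) • u (x - y)

/-- The pullback metric `(Du)ᵀ Du` of a map `u : ℝ^n → ℝ^q`, with entries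
`g_{ij} = Σ_a ∂_i u^a ∂_j u^a`. -/
noncomputable def pullbackMetric (n q : ℕ)
    (u : EuclideanSpace ℝ (Fin n) → EuclideanSpace ℝ (Fin q))
    (x : EuclideanSpace ℝ (Fin n)) : Fin n → Fin n → ℝ :=
  fun i j => ∑ a : Fin q,
    fderiv ℝ u x (EuclideanSpace.single i 1) a * fderiv ℝ u x (EuclideanSpace.single j 1) a


section PartialDerivatives

variable {n : ℕ} {G : Type*} [NormedAddCommGroup G] [NormedSpace ℝ G]

lemma opNorm_le_of_norm_single_le (L : EuclideanSpace ℝ (Fin n) →L[ℝ] G) {M : ℝ} (hM : 0 ≤ M)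
    (h : ∀ k, ‖L (EuclideanSpace.single k 1)‖ ≤ M) : ‖L‖ ≤ n * M := by
  refine L.opNorm_le_bound (by positivity) fun v => ?_
  have hv : v = ∑ k, v k • EuclideanSpace.single k (1 : ℝ) := by
    ext i
    simp [Finset.sum_apply, Pi.single_apply]
  calc ‖L v‖ = ‖∑ k, v k • L (EuclideanSpace.single k 1)‖ := by
        conv_lhs => rw [hv, map_sum]
        simp only [map_smul]
    _ ≤ ∑ k, ‖v k • L (EuclideanSpace.single k 1)‖ := norm_sum_le _ _
    _ ≤ ∑ _k : Fin n, ‖v‖ * M := by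
        refine Finset.sum_le_sum fun k _ => ?_
        rw [norm_smul]
        exact mul_le_mul (PiLp.norm_apply_le v k) (h k) (norm_nonneg _) (norm_nonneg _)
    _ = n * M * ‖v‖ := by
        rw [Finset.sum_const, Finset.card_univ, Fintype.card_fin, nsmul_eq_mul]
        ring

/-- First order Taylor estimate under a bound on the second partial derivatives. -/
lemma norm_taylor_le_of_norm_partial_le {g : EuclideanSpace ℝ (Fin n) → G}
    {Ω : Set (EuclideanSpace ℝ (Fin n))} (hΩ : IsOpen Ω) (hg : ContDiffOn ℝ 2 g Ω)
    {x : EuclideanSpace ℝ (Fin n)} {ρ M : ℝ} (hM : 0 ≤ M) (hball : closedBall x ρ ⊆ Ω)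
    (h : ∀ y ∈ closedBall x ρ, ∀ k l : Fin n,
      ‖fderiv ℝ (fun z => fderiv ℝ g z (EuclideanSpace.single l 1)) y
        (EuclideanSpace.single k 1)‖ ≤ M)
    {v : EuclideanSpace ℝ (Fin n)} (hv : ‖v‖ ≤ ρ) :
    ‖g (x - v) - g x + fderiv ℝ g x v‖ ≤ n ^ 2 * M * ρ ^ 2 := by
  have hρ : 0 ≤ ρ := (norm_nonneg v).trans hv
  have hdiff : ∀ y ∈ closedBall x ρ, DifferentiableAt ℝ g y := fun y hy =>
    (hg.contDiffAt (hΩ.mem_nhds (hball hy))).differentiableAt (by norm_num)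
  have hdiff2 : ∀ y ∈ closedBall x ρ, DifferentiableAt ℝ (fderiv ℝ g) y := fun y hy =>
    ((hg.contDiffAt (hΩ.mem_nhds (hball hy))).fderiv_right (m := 1)
      (by norm_num)).differentiableAt (by norm_num)
  have hx : x ∈ closedBall x ρ := mem_closedBall_self hρ
  have hDg : ∀ y ∈ closedBall x ρ, ‖fderiv ℝ g y - fderiv ℝ g x‖ ≤ n * (n * M * ρ) := by
    intro y hy
    refine opNorm_le_of_norm_single_le _ (by positivity) fun l => ?_
    have := (convex_closedBall x ρ).norm_image_sub_le_of_norm_fderiv_le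
      (f := fun z => fderiv ℝ g z (EuclideanSpace.single l 1)) (𝕜 := ℝ) (C := n * M)
      (fun z hz => (hdiff2 z hz).clm_apply (differentiableAt_const _))
      (fun z hz => opNorm_le_of_norm_single_le _ hM fun k => h z hz k l) hx hy
    refine this.trans ?_
    gcongr
    exact mem_closedBall_iff_norm.1 hy
  have hy : x - v ∈ closedBall x ρ := by simpa [mem_closedBall_iff_norm] using hv
  have := (convex_closedBall x ρ).norm_image_sub_le_of_norm_fderiv_le' hdiff hDg hx hy
  have hsub : x - v - x = -v := by abel
  rw [hsub, map_neg, sub_neg_eq_add, norm_neg] at this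
  calc _ ≤ n * (n * M * ρ) * ‖v‖ := this
    _ ≤ n * (n * M * ρ) * ρ := by gcongr
    _ = _ := by ring

end PartialDerivatives

/-- A `C¹` map on an open set agrees on a closed ball with a compactly supported `C¹` map. -/
lemma exists_contDiff_hasCompactSupport_eqOn {E F : Type*} [NormedAddCommGroup E]
    [InnerProductSpace ℝ E] [FiniteDimensional ℝ E] [NormedAddCommGroup F] [NormedSpace ℝ F]
    {u : E → F} {Ω : Set E} (hΩ : IsOpen Ω) (hu : ContDiffOn ℝ 1 u Ω) {x : E} {ρ r : ℝ}
    (hρ : 0 < ρ) (hr : ρ < r) (hball : closedBall x r ⊆ Ω) :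
    ∃ v : E → F, ContDiff ℝ 1 v ∧ HasCompactSupport v ∧ Set.EqOn v u (closedBall x ρ) := by
  let χ : ContDiffBump x := ⟨ρ, r, hρ, hr⟩
  have hsupp : tsupport (fun y => χ y • u y) ⊆ closedBall x r :=
    (closure_mono (Function.support_smul_subset_left _ _)).trans χ.tsupport_eq.le
  refine ⟨fun y => χ y • u y, contDiff_iff_contDiffAt.2 fun y => ?_, ?_, fun y hy => ?_⟩
  · by_cases hy : y ∈ Ω
    · exact χ.contDiff.contDiffAt.smul (hu.contDiffAt (hΩ.mem_nhds hy))
    · have h0 := notMem_tsupport_iff_eventuallyEq.1 fun h => hy (hball (hsupp h))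
      exact contDiffAt_const.congr_of_eventuallyEq h0
  · exact χ.hasCompactSupport.smul_right
  · simp only [χ.one_of_mem_closedBall hy, one_smul]

section Kernels

variable {E F : Type*} [NormedAddCommGroup E] [InnerProductSpace ℝ E] [FiniteDimensional ℝ E]
  [MeasurableSpace E] [BorelSpace E] [NormedAddCommGroup F] [InnerProductSpace ℝ F]

lemma integrable_smul_of_hasCompactSupport {w : E → ℝ} (hw : Continuous w)
    (hwc : HasCompactSupport w) {p : E → F} (hp : Continuous p) :
    Integrable fun y => w y • p y :=
  (hw.smul hp).integrable_of_hasCompactSupport hwc.smul_right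

lemma norm_integral_smul_le {w : E → ℝ} (hw : Continuous w) (hwc : HasCompactSupport w)
    {p : E → F} {s : Set E} (hs : support w ⊆ s) {B : ℝ} (hp : ∀ y ∈ s, ‖p y‖ ≤ B) :
    ‖∫ y, w y • p y‖ ≤ (∫ y, ‖w y‖) * B := by
  rw [← integral_mul_const]
  refine norm_integral_le_of_norm_le
    ((hw.integrable_of_hasCompactSupport hwc).norm.mul_const _) (ae_of_all _ fun y => ?_)
  rw [norm_smul]
  by_cases hy : w y = 0
  · simp [hy]
  · exact mul_le_mul_of_nonneg_left (hp y (hs hy)) (norm_nonneg _)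

lemma integral_smul_eq_add [CompleteSpace F] {w : E → ℝ} (hw : Continuous w)
    (hwc : HasCompactSupport w) {f : E → F} (hf : Continuous f) (c : F) :
    ∫ y, w y • f y = (∫ y, w y) • c + ∫ y, w y • (f y - c) := by
  simp only [smul_sub]
  rw [integral_sub (integrable_smul_of_hasCompactSupport hw hwc hf)
    (integrable_smul_of_hasCompactSupport hw hwc continuous_const), integral_smul_const]
  abel

lemma inner_integral_smul_sub_add [CompleteSpace F] {w : E → ℝ} (hw : Continuous w)
    (hwc : HasCompactSupport w) {p q : E → F} (hp : Continuous p) (hq : Continuous q) (a b : F) :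
    inner ℝ (∫ y, w y • (p y - a)) b + inner ℝ a (∫ y, w y • (q y - b)) =
      ∫ y, w y • (inner ℝ (p y) (q y) - inner ℝ a b - inner ℝ (p y - a) (q y - b)) := by
  have hpa : Integrable fun y => w y • (p y - a) :=
    integrable_smul_of_hasCompactSupport hw hwc (hp.sub continuous_const)
  have hqb : Integrable fun y => w y • (q y - b) :=
    integrable_smul_of_hasCompactSupport hw hwc (hq.sub continuous_const)
  rw [real_inner_comm, ← integral_inner hpa, ← integral_inner hqb,
    ← integral_add (hpa.const_inner _) (hqb.const_inner _)]
  congr 1 with y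
  simp only [inner_smul_right, inner_sub_left, inner_sub_right, smul_eq_mul,
    real_inner_comm b]
  ring

/-- The inner product of two averages compared with `⟪a, b⟫`: the error is quadratic in the
oscillation `H`, up to the oscillation `R` of the inner product itself. -/
lemma abs_inner_sub_inner_integral_le [CompleteSpace F] {w : E → ℝ} (hw : Continuous w)
    (hwc : HasCompactSupport w) {s : Set E} (hs : support w ⊆ s) (hw0 : ∀ y, 0 ≤ w y)
    (hw1 : ∫ y, w y = 1) {p q : E → F} (hp : Continuous p) (hq : Continuous q) {a b : F}
    {H R : ℝ} (hpa : ∀ y ∈ s, ‖p y - a‖ ≤ H) (hqb : ∀ y ∈ s, ‖q y - b‖ ≤ H)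
    (hR : ∀ y ∈ s, |inner ℝ (p y) (q y) - inner ℝ a b| ≤ R) :
    |inner ℝ a b - inner ℝ (∫ y, w y • p y) (∫ y, w y • q y)| ≤ R + 2 * H ^ 2 := by
  have hmass : ∫ y, ‖w y‖ = 1 := by simp only [Real.norm_of_nonneg (hw0 _), hw1]
  have hdp := norm_integral_smul_le hw hwc hs hpa
  have hdq := norm_integral_smul_le hw hwc hs hqb
  have hid := inner_integral_smul_sub_add hw hwc hp hq a b
  have hrem : ‖∫ y, w y • (inner ℝ (p y) (q y) - inner ℝ a b - inner ℝ (p y - a) (q y - b))‖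
      ≤ (∫ y, ‖w y‖) * (R + H ^ 2) := by
    refine norm_integral_smul_le hw hwc hs fun y hy => (norm_sub_le _ _).trans ?_
    refine add_le_add (hR y hy) ((norm_inner_le_norm _ _).trans ?_)
    rw [sq]
    exact mul_le_mul (hpa y hy) (hqb y hy) (norm_nonneg _) ((norm_nonneg _).trans (hpa y hy))
  rw [hmass, one_mul] at hdp hdq hrem
  rw [← hid] at hrem
  rw [integral_smul_eq_add hw hwc hp a, integral_smul_eq_add hw hwc hq b, hw1, one_smul, one_smul]
  set P := ∫ y, w y • (p y - a)
  set Q := ∫ y, w y • (q y - b)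
  have hPQ : |inner ℝ P Q| ≤ H ^ 2 := by
    rw [sq]
    exact (abs_real_inner_le_norm P Q).trans
      (mul_le_mul hdp hdq (norm_nonneg _) ((norm_nonneg _).trans hdp))
  have : inner ℝ a b - inner ℝ (a + P) (b + Q)
      = -(inner ℝ P b + inner ℝ a Q) - inner ℝ P Q := by
    simp only [inner_add_left, inner_add_right]; ring
  rw [this]
  refine (abs_sub _ _).trans ?_
  rw [abs_neg]
  rw [Real.norm_eq_abs] at hrem
  linarith

/-- The derivative counterpart of `abs_inner_sub_inner_integral_le`: `ψ` plays the role of a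
derivative of the weight `w`, and has vanishing mass. -/
lemma abs_sub_inner_integral_deriv_le [CompleteSpace F] {w ψ : E → ℝ} (hw : Continuous w)
    (hwc : HasCompactSupport w) {s : Set E} (hs : support w ⊆ s) (hw0 : ∀ y, 0 ≤ w y)
    (hw1 : ∫ y, w y = 1) (hψ : Continuous ψ) (hψc : HasCompactSupport ψ) (hψs : support ψ ⊆ s)
    (hψ0 : ∫ y, ψ y = 0) {T : E →L[ℝ] ℝ} {t : ℝ} (hT : ∫ y, ψ y • T y = -t)
    {p q : E → F} (hp : Continuous p) (hq : Continuous q) {a b : F}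
    {H R : ℝ} (hpa : ∀ y ∈ s, ‖p y - a‖ ≤ H) (hqb : ∀ y ∈ s, ‖q y - b‖ ≤ H)
    (hR : ∀ y ∈ s, |inner ℝ (p y) (q y) - inner ℝ a b + T y| ≤ R) :
    |t - (inner ℝ (∫ y, ψ y • p y) (∫ y, w y • q y) +
        inner ℝ (∫ y, w y • p y) (∫ y, ψ y • q y))| ≤ (∫ y, ‖ψ y‖) * (R + 3 * H ^ 2) := by
  set A := ∫ y, ‖ψ y‖
  have hmass : ∫ y, ‖w y‖ = 1 := by simp only [Real.norm_of_nonneg (hw0 _), hw1]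
  have hdp := norm_integral_smul_le hw hwc hs hpa
  have hdq := norm_integral_smul_le hw hwc hs hqb
  rw [hmass, one_mul] at hdp hdq
  have hep := norm_integral_smul_le hψ hψc hψs hpa
  have heq := norm_integral_smul_le hψ hψc hψs hqb
  have hid := inner_integral_smul_sub_add hψ hψc hp hq a b
  have hrem : ‖∫ y, ψ y • (inner ℝ (p y) (q y) - inner ℝ a b + T y
      - inner ℝ (p y - a) (q y - b))‖ ≤ A * (R + H ^ 2) := by
    refine norm_integral_smul_le hψ hψc hψs fun y hy => (norm_sub_le _ _).trans ?_
    refine add_le_add (hR y hy) ((norm_inner_le_norm _ _).trans ?_)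
    rw [sq]
    exact mul_le_mul (hpa y hy) (hqb y hy) (norm_nonneg _) ((norm_nonneg _).trans (hpa y hy))
  have hsplit : ∫ y, ψ y • (inner ℝ (p y) (q y) - inner ℝ a b + T y
      - inner ℝ (p y - a) (q y - b)) =
      (∫ y, ψ y • (inner ℝ (p y) (q y) - inner ℝ a b - inner ℝ (p y - a) (q y - b))) - t := by
    rw [sub_eq_add_neg _ t, ← hT, ← integral_add
      (integrable_smul_of_hasCompactSupport hψ hψc (by fun_prop))
      (integrable_smul_of_hasCompactSupport hψ hψc T.continuous)]
    congr 1 with y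
    simp only [smul_eq_mul]
    ring
  rw [hsplit, ← hid] at hrem
  rw [integral_smul_eq_add hw hwc hp a, integral_smul_eq_add hw hwc hq b,
    integral_smul_eq_add hψ hψc hp a, integral_smul_eq_add hψ hψc hq b, hw1, hψ0]
  simp only [one_smul, zero_smul, zero_add]
  set P := ∫ y, w y • (p y - a)
  set Q := ∫ y, w y • (q y - b)
  set P' := ∫ y, ψ y • (p y - a)
  set Q' := ∫ y, ψ y • (q y - b)
  have hPQ : |inner ℝ P' Q| ≤ A * H ^ 2 := by
    refine (abs_real_inner_le_norm P' Q).trans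
      ((mul_le_mul hep hdq (norm_nonneg _) ((norm_nonneg _).trans hep)).trans_eq ?_)
    ring
  have hQP : |inner ℝ P Q'| ≤ A * H ^ 2 := by
    refine (abs_real_inner_le_norm P Q').trans
      ((mul_le_mul hdp heq (norm_nonneg _) ((norm_nonneg _).trans hdp)).trans_eq ?_)
    ring
  have : t - (inner ℝ P' (b + Q) + inner ℝ (a + P) Q')
      = -(inner ℝ P' b + inner ℝ a Q' - t) - inner ℝ P' Q - inner ℝ P Q' := by
    simp only [inner_add_left, inner_add_right]; ring
  rw [this]
  rw [Real.norm_eq_abs] at hrem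
  refine (abs_sub _ _).trans ((add_le_add_left (abs_sub _ _) _).trans ?_)
  rw [abs_neg]
  linarith

lemma integral_fderiv_smul_clm {w : E → ℝ} (hw : ContDiff ℝ 1 w) (hwc : HasCompactSupport w)
    (hw1 : ∫ y, w y = 1) (T : E →L[ℝ] ℝ) (e : E) :
    ∫ y, fderiv ℝ w y e • T y = -T e := by
  have hw' : Continuous fun y => fderiv ℝ w y e :=
    (hw.continuous_fderiv one_ne_zero).clm_apply continuous_const
  have hwc' : HasCompactSupport fun y => fderiv ℝ w y e := hwc.fderiv_apply ℝ e
  have := integral_mul_fderiv_eq_neg_fderiv_mul_of_integrable (μ := volume) (f := T) (g := w)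
    (v := e)
    (by simpa [mul_comm] using (hw.continuous.integrable_of_hasCompactSupport hwc).const_mul (T e))
    (by simpa [mul_comm] using integrable_smul_of_hasCompactSupport hw' hwc' T.continuous)
    (by simpa [mul_comm] using
      integrable_smul_of_hasCompactSupport hw.continuous hwc T.continuous)
    (fun _ _ => T.differentiableAt) (fun y _ => hw.differentiable one_ne_zero y)
  simp only [ContinuousLinearMap.fderiv, integral_const_mul, hw1, mul_one] at this
  rw [← this]
  simp only [smul_eq_mul, mul_comm]

lemma integral_fderiv_eq_zero_of_hasCompactSupport {w : E → ℝ} (hw : ContDiff ℝ 1 w)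
    (hwc : HasCompactSupport w) (e : E) : ∫ y, fderiv ℝ w y e = 0 := by
  have hw' : Continuous fun y => fderiv ℝ w y e :=
    (hw.continuous_fderiv one_ne_zero).clm_apply continuous_const
  have hwc' : HasCompactSupport fun y => fderiv ℝ w y e := hwc.fderiv_apply ℝ e
  have := integral_mul_fderiv_eq_neg_fderiv_mul_of_integrable (μ := volume)
    (f := fun _ => (1 : ℝ)) (g := w) (v := e) (by simp)
    (by simpa using hw'.integrable_of_hasCompactSupport hwc')
    (by simpa using hw.continuous.integrable_of_hasCompactSupport hwc)
    (fun _ _ => differentiableAt_const _) (fun y _ => hw.differentiable one_ne_zero y)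
  simpa using this

open scoped Convolution

lemma fderiv_convolution_apply {w : E → ℝ} (hw : Continuous w) {v : E → F}
    (hv : ContDiff ℝ 1 v) (hvc : HasCompactSupport v) (x e : E) :
    fderiv ℝ (w ⋆[ContinuousLinearMap.lsmul ℝ ℝ, volume] v) x e
      = (w ⋆[ContinuousLinearMap.lsmul ℝ ℝ, volume] fun y => fderiv ℝ v y e) x := by
  rw [(hvc.hasFDerivAt_convolution_right _ hw.locallyIntegrable hv x).fderiv]
  exact convolution_precompR_apply _ hw.locallyIntegrable (hvc.fderiv ℝ)
    (hv.continuous_fderiv one_ne_zero) x e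

lemma hasFDerivAt_convolution_left_apply {w : E → ℝ} (hw : ContDiff ℝ 1 w)
    (hwc : HasCompactSupport w) {f : E → F} (hf : Continuous f) (x : E) :
    ∃ L : E →L[ℝ] F, HasFDerivAt (w ⋆[ContinuousLinearMap.lsmul ℝ ℝ, volume] f) L x ∧
      ∀ e, L e = ∫ y, fderiv ℝ w y e • f (x - y) := by
  refine ⟨_, hwc.hasFDerivAt_convolution_left _ hw hf.locallyIntegrable x, fun e => ?_⟩
  have hint : ConvolutionExistsAt (fderiv ℝ w) f x
      ((ContinuousLinearMap.lsmul ℝ ℝ : ℝ →L[ℝ] F →L[ℝ] F).precompL E) volume :=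
    (hwc.fderiv ℝ).convolutionExists_left _ (hw.continuous_fderiv one_ne_zero)
      hf.locallyIntegrable x
  rw [convolution_def, ContinuousLinearMap.integral_apply hint]
  rfl

end Kernels

section Mollifier

variable {n : ℕ} {φ : EuclideanSpace ℝ (Fin n) → ℝ} {ε : ℝ}

/-- The rescaled mollifier `φ_ε(y) = ε^{-n} φ(y/ε)`. -/
noncomputable def mollifier (n : ℕ) (φ : EuclideanSpace ℝ (Fin n) → ℝ) (ε : ℝ)
    (y : EuclideanSpace ℝ (Fin n)) : ℝ :=
  (ε ^ n)⁻¹ * φ (ε⁻¹ • y)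

lemma tsupport_mollifier_subset (hε : 0 < ε) (h : support φ ⊆ closedBall 0 1) :
    tsupport (mollifier n φ ε) ⊆ closedBall 0 ε := by
  refine closure_minimal (fun y hy => ?_) isClosed_closedBall
  have := h (right_ne_zero_of_mul hy)
  rw [mem_closedBall_zero_iff, norm_smul, Real.norm_of_nonneg (by positivity)] at this
  rwa [mem_closedBall_zero_iff, ← div_le_one hε, div_eq_inv_mul]

lemma contDiff_mollifier (h : ContDiff ℝ 1 φ) : ContDiff ℝ 1 (mollifier n φ ε) :=
  contDiff_const.mul (h.comp (contDiff_const_smul _))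

lemma integral_mollifier (hε : 0 < ε) : ∫ y, mollifier n φ ε y = ∫ y, φ y := by
  simp only [mollifier]
  rw [integral_const_mul, Measure.integral_comp_inv_smul_of_nonneg _ _ hε.le, smul_eq_mul,
    finrank_euclideanSpace_fin, inv_mul_cancel_left₀ (by positivity)]

lemma integral_norm_fderiv_mollifier_single_le (hε : 0 < ε) (h : ContDiff ℝ 1 φ)
    (hc : HasCompactSupport φ) (k : Fin n) :
    ∫ y, ‖fderiv ℝ (mollifier n φ ε) y (EuclideanSpace.single k 1)‖
      ≤ (∫ y, ‖fderiv ℝ φ y‖) / ε := by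
  have hfd : ∀ y, fderiv ℝ (mollifier n φ ε) y (EuclideanSpace.single k 1) =
      (ε ^ n)⁻¹ * (ε⁻¹ * fderiv ℝ φ (ε⁻¹ • y) (EuclideanSpace.single k 1)) := by
    intro y
    have h1 : HasFDerivAt (fun y : EuclideanSpace ℝ (Fin n) => φ (ε⁻¹ • y)) _ y :=
      (h.differentiable one_ne_zero (ε⁻¹ • y)).hasFDerivAt.comp y
        ((hasFDerivAt_id y).const_smul ε⁻¹)
    have h2 : HasFDerivAt (mollifier n φ ε) _ y := h1.const_mul (ε ^ n)⁻¹
    rw [h2.fderiv]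
    simp
  have hcomp : ∫ y, ‖fderiv ℝ (mollifier n φ ε) y (EuclideanSpace.single k 1)‖
      = ε⁻¹ * ∫ y, ‖fderiv ℝ φ y (EuclideanSpace.single k 1)‖ := by
    simp only [hfd, norm_mul, Real.norm_of_nonneg (inv_nonneg.2 hε.le),
      Real.norm_of_nonneg (inv_nonneg.2 (pow_nonneg hε.le n)), integral_const_mul]
    rw [Measure.integral_comp_inv_smul_of_nonneg volume
      (fun y => ‖fderiv ℝ φ y (EuclideanSpace.single k 1)‖) hε.le, smul_eq_mul,
      finrank_euclideanSpace_fin]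
    field_simp
  rw [hcomp, div_eq_inv_mul]
  have hcont := h.continuous_fderiv one_ne_zero
  refine mul_le_mul_of_nonneg_left (integral_mono ?_ ?_ fun y => ?_) (by positivity)
  · exact ((hcont.clm_apply continuous_const).integrable_of_hasCompactSupport
      (hc.fderiv_apply ℝ _)).norm
  · exact (hcont.integrable_of_hasCompactSupport (hc.fderiv ℝ)).norm
  · simpa using (fderiv ℝ φ y).le_opNorm (EuclideanSpace.single k 1)

end Mollifier

lemma abs_entry_le_pi_norm {ι κ : Type*} [Fintype ι] [Fintype κ] (B : ι → κ → ℝ) (i : ι) (j : κ) :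
    |B i j| ≤ ‖B‖ :=
  (norm_le_pi_norm (B i) j).trans (norm_le_pi_norm B i)

lemma pullbackMetric_eq_inner {n q : ℕ}
    (u : EuclideanSpace ℝ (Fin n) → EuclideanSpace ℝ (Fin q))
    (x : EuclideanSpace ℝ (Fin n)) (i j : Fin n) :
    pullbackMetric n q u x i j = inner ℝ (fderiv ℝ u x (EuclideanSpace.single i 1))
      (fderiv ℝ u x (EuclideanSpace.single j 1)) := by
  simp [pullbackMetric, PiLp.inner_apply, mul_comm]

open scoped Convolution Topology in
/-- Near `x`, the pullback metric of the mollification only involves `u` near `x`, and is given by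
inner products of mollified first derivatives. -/
lemma exists_pullbackMetric_mollifyV_eventuallyEq {n q : ℕ} {φ : EuclideanSpace ℝ (Fin n) → ℝ}
    (hφ : ContDiff ℝ 1 φ) (hφ_supp : support φ ⊆ closedBall 0 1)
    {u : EuclideanSpace ℝ (Fin n) → EuclideanSpace ℝ (Fin q)}
    {Ω : Set (EuclideanSpace ℝ (Fin n))} (hΩ : IsOpen Ω) (hu : ContDiffOn ℝ 1 u Ω)
    {x : EuclideanSpace ℝ (Fin n)} {r ε : ℝ} (hball : closedBall x r ⊆ Ω) (hε : 0 < ε)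
    (hεr : ε < r) :
    ∃ f : Fin n → EuclideanSpace ℝ (Fin n) → EuclideanSpace ℝ (Fin q),
      (∀ i, Continuous (f i)) ∧
      (∀ i, ∀ z ∈ closedBall x ε, f i z = fderiv ℝ u z (EuclideanSpace.single i 1)) ∧
      pullbackMetric n q (mollifyV n q φ ε u) =ᶠ[𝓝 x] fun z i j =>
        inner ℝ ((mollifier n φ ε ⋆[ContinuousLinearMap.lsmul ℝ ℝ, volume] f i) z)
          ((mollifier n φ ε ⋆[ContinuousLinearMap.lsmul ℝ ℝ, volume] f j) z) := by
  obtain ⟨ρ, hερ, hρr⟩ := exists_between hεr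
  obtain ⟨v, hv, hvc, hvu⟩ :=
    exists_contDiff_hasCompactSupport_eqOn hΩ hu (hε.trans hερ) hρr hball
  refine ⟨fun i z => fderiv ℝ v z (EuclideanSpace.single i 1),
    fun i => (hv.continuous_fderiv one_ne_zero).clm_apply continuous_const,
    fun i z hz => ?_, ?_⟩
  · have : v =ᶠ[𝓝 z] u := (hvu.mono ball_subset_closedBall).eventuallyEq_of_mem
      (isOpen_ball.mem_nhds (closedBall_subset_ball hερ hz))
    exact DFunLike.congr_fun (this.fderiv_eq (𝕜 := ℝ)) _
  · have hloc : mollifyV n q φ ε u =ᶠ[𝓝 x]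
        (mollifier n φ ε ⋆[ContinuousLinearMap.lsmul ℝ ℝ, volume] v) := by
      filter_upwards [ball_mem_nhds x (sub_pos.2 hερ)] with z hz
      refine integral_congr_ae (ae_of_all _ fun y => ?_)
      change mollifier n φ ε y • u (z - y) = mollifier n φ ε y • v (z - y)
      by_cases hy : mollifier n φ ε y = 0
      · simp [hy]
      · have hyε : ‖y‖ ≤ ε := mem_closedBall_zero_iff.1
          (tsupport_mollifier_subset hε hφ_supp (subset_tsupport _ hy))
        rw [hvu]
        rw [mem_ball_iff_norm] at hz
        rw [mem_closedBall_iff_norm, sub_right_comm]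
        linarith [norm_sub_le (z - x) y]
    filter_upwards [hloc.fderiv (𝕜 := ℝ)] with z hz
    funext i j
    rw [pullbackMetric_eq_inner, hz,
      fderiv_convolution_apply (contDiff_mollifier hφ).continuous hv hvc,
      fderiv_convolution_apply (contDiff_mollifier hφ).continuous hv hvc]

/-- if `u : Ω → ℝ^q` is a `C^{1,α}` immersion whose pullback metric
`g = (Du)ᵀDu` is `C²`, `K ⊂ Ω` is compact and the closed `r`-neighborhood `K_r` of `K`
lies in `Ω`, then there is `C` depending only on `n, q, α, φ`, a bound `Mu` for
`‖u‖_{C^{1,α}(K_r)}` and a bound `Mg` for `‖g‖_{C²(K_r)}`, such that for `0 < ε < min(r,1)`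
one has `‖g − (D(u*φ_ε))ᵀ D(u*φ_ε)‖_{C¹(K)} ≤ C ε^{2α−1}`, the `C¹` norm on `K` being the
sup on `K` of the matrix field and of all of its first partial derivatives. -/
theorem pullback_metric_mollification_estimate
    (n q : ℕ) (hn : 1 ≤ n) (hq : 1 ≤ q) (α : ℝ) (hα0 : 0 < α) (hα1 : α ≤ 1)
    (φ : EuclideanSpace ℝ (Fin n) → ℝ)
    (hφ_smooth : ContDiff ℝ (⊤ : ℕ∞) φ)
    (hφ_supp : Function.support φ ⊆ Metric.closedBall 0 1)
    (hφ_nonneg : ∀ x, 0 ≤ φ x)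
    (hφ_int : ∫ x, φ x = 1)
    (Mu Mg : ℝ) :
    ∃ C : ℝ, 0 < C ∧
      ∀ (Ω : Set (EuclideanSpace ℝ (Fin n)))
        (u : EuclideanSpace ℝ (Fin n) → EuclideanSpace ℝ (Fin q))
        (K : Set (EuclideanSpace ℝ (Fin n))) (r : ℝ),
        IsOpen Ω → IsCompact K → K ⊆ Ω → 0 < r →
        Metric.cthickening r K ⊆ Ω →
        -- `u` is `C¹` on `Ω` and an immersion:
        ContDiffOn ℝ 1 u Ω →
        (∀ x ∈ Ω, Function.Injective (fderiv ℝ u x)) →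
        -- `C^{1,α}(K_r)` bound for `u`:
        (∀ x ∈ Metric.cthickening r K, ‖u x‖ ≤ Mu ∧ ‖fderiv ℝ u x‖ ≤ Mu) →
        (∀ x ∈ Metric.cthickening r K, ∀ y ∈ Metric.cthickening r K,
          ‖fderiv ℝ u x - fderiv ℝ u y‖ ≤ Mu * ‖x - y‖ ^ α) →
        -- the pullback metric `g` is `C²` on `Ω`, with `C²(K_r)` bound `Mg`:
        ContDiffOn ℝ 2 (pullbackMetric n q u) Ω →
        (∀ x ∈ Metric.cthickening r K,
          ‖pullbackMetric n q u x‖ ≤ Mg ∧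
          (∀ k : Fin n,
            ‖fderiv ℝ (pullbackMetric n q u) x (EuclideanSpace.single k 1)‖ ≤ Mg) ∧
          (∀ k l : Fin n,
            ‖fderiv ℝ (fun y => fderiv ℝ (pullbackMetric n q u) y
                (EuclideanSpace.single l 1)) x (EuclideanSpace.single k 1)‖ ≤ Mg)) →
        ∀ ε : ℝ, 0 < ε → ε < min r 1 →
          (∀ x ∈ K,
            ‖pullbackMetric n q u x - pullbackMetric n q (mollifyV n q φ ε u) x‖
              ≤ C * ε ^ (2 * α - 1)) ∧
          (∀ x ∈ K, ∀ k : Fin n,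
            ‖fderiv ℝ (fun y => pullbackMetric n q u y
                  - pullbackMetric n q (mollifyV n q φ ε u) y) x
                (EuclideanSpace.single k 1)‖
              ≤ C * ε ^ (2 * α - 1)) := by
  have hφ1 : ContDiff ℝ 1 φ := hφ_smooth.of_le (by exact_mod_cast le_top)
  have hφc : HasCompactSupport φ :=
    HasCompactSupport.of_support_subset_isCompact (isCompact_closedBall 0 1) hφ_supp
  set A := ∫ y, ‖fderiv ℝ φ y‖
  have hA : 0 ≤ A := integral_nonneg fun _ => norm_nonneg _
  refine ⟨1 + (n ^ 2 * |Mg| + n * |Mg| + 2 * Mu ^ 2) + A * (n ^ 2 * |Mg| + 3 * Mu ^ 2),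
    by positivity, ?_⟩
  intro Ω u K r hΩ _ _ _ hKr hu _ hMu hHolder hg hMg ε hε hεr
  obtain ⟨hεr, hε1⟩ := lt_min_iff.1 hεr
  set S := ε ^ (2 * α - 1) with hS_def
  have hS : ε ≤ S := by
    simpa using Real.rpow_le_rpow_of_exponent_ge hε hε1.le (by linarith : 2 * α - 1 ≤ 1)
  have hS0 : 0 < S := hε.trans_le hS
  have hεα : (ε ^ α) ^ 2 = S * ε := by
    rw [hS_def, ← Real.rpow_natCast, ← Real.rpow_mul hε.le, ← Real.rpow_add_one hε.ne']
    congr 1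
    push_cast
    ring
  have key : ∀ x ∈ K, ∀ i j : Fin n,
      |pullbackMetric n q u x i j - pullbackMetric n q (mollifyV n q φ ε u) x i j| ≤
        (n ^ 2 * |Mg| + n * |Mg| + 2 * Mu ^ 2) * S ∧
      ∀ k : Fin n, |fderiv ℝ (fun y => pullbackMetric n q u y
        - pullbackMetric n q (mollifyV n q φ ε u) y) x (EuclideanSpace.single k 1) i j| ≤
        A * (n ^ 2 * |Mg| + 3 * Mu ^ 2) * S := by
    intro x hx i j
    have hball : closedBall x r ⊆ cthickening r K := closedBall_subset_cthickening hx r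
    have hballε : closedBall x ε ⊆ cthickening r K :=
      (closedBall_subset_closedBall hεr.le).trans hball
    have hxε : x ∈ closedBall x ε := mem_closedBall_self hε.le
    have hMu0 : 0 ≤ Mu := (norm_nonneg _).trans (hMu x (hballε hxε)).1
    have hMg0 : 0 ≤ Mg := (norm_nonneg _).trans (hMg x (hballε hxε)).1
    rw [abs_of_nonneg hMg0]
    obtain ⟨f, hf, hfu, hloc⟩ := exists_pullbackMetric_mollifyV_eventuallyEq hφ1 hφ_supp hΩ hu
      (hball.trans hKr) hε hεr
    set w := mollifier n φ ε
    have hw : ContDiff ℝ 1 w := contDiff_mollifier hφ1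
    have hws : tsupport w ⊆ closedBall 0 ε := tsupport_mollifier_subset hε hφ_supp
    have hwc : HasCompactSupport w :=
      (isCompact_closedBall _ _).of_isClosed_subset (isClosed_tsupport _) hws
    have hw0 : ∀ y, 0 ≤ w y := fun y => mul_nonneg (by positivity) (hφ_nonneg _)
    have hw1 : ∫ y, w y = 1 := (integral_mollifier hε).trans hφ_int
    have hmem : ∀ y ∈ closedBall (0 : EuclideanSpace ℝ (Fin n)) ε, x - y ∈ closedBall x ε := by
      intro y hy
      simpa [mem_closedBall_iff_norm] using hy
    have hgf : ∀ z ∈ closedBall x ε, pullbackMetric n q u z i j = inner ℝ (f i z) (f j z) := by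
      intro z hz
      rw [pullbackMetric_eq_inner, hfu i z hz, hfu j z hz]
    have hosc : ∀ l, ∀ y ∈ closedBall (0 : EuclideanSpace ℝ (Fin n)) ε,
        ‖f l (x - y) - f l x‖ ≤ Mu * ε ^ α := by
      intro l y hy
      rw [hfu l _ (hmem y hy), hfu l x hxε, ← sub_apply]
      refine (ContinuousLinearMap.le_opNorm _ _).trans ?_
      rw [PiLp.norm_single, norm_one, mul_one]
      refine (hHolder _ (hballε (hmem y hy)) _ (hballε hxε)).trans ?_
      rw [sub_sub_cancel_left, norm_neg]
      have := mem_closedBall_zero_iff.1 hy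
      gcongr
    let T : EuclideanSpace ℝ (Fin n) →L[ℝ] ℝ :=
      (ContinuousLinearMap.proj (R := ℝ) (φ := fun _ : Fin n => ℝ) j).comp
        ((ContinuousLinearMap.proj (R := ℝ) (φ := fun _ : Fin n => Fin n → ℝ) i).comp
          (fderiv ℝ (pullbackMetric n q u) x))
    have hTaylor : ∀ y ∈ closedBall (0 : EuclideanSpace ℝ (Fin n)) ε,
        |inner ℝ (f i (x - y)) (f j (x - y)) - inner ℝ (f i x) (f j x) + T y|
          ≤ n ^ 2 * Mg * ε ^ 2 := by
      intro y hy
      rw [← hgf _ (hmem y hy), ← hgf x hxε]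
      have := norm_taylor_le_of_norm_partial_le hΩ hg hMg0 (hballε.trans hKr)
        (fun z hz => (hMg z (hballε hz)).2.2) (mem_closedBall_zero_iff.1 hy)
      exact (abs_entry_le_pi_norm _ i j).trans this
    have hTy : ∀ y ∈ closedBall (0 : EuclideanSpace ℝ (Fin n)) ε, |T y| ≤ n * Mg * ε := by
      intro y hy
      have h1 : ‖fderiv ℝ (pullbackMetric n q u) x‖ ≤ n * Mg :=
        opNorm_le_of_norm_single_le _ hMg0 (hMg x (hballε hxε)).2.1
      have h2 : |T y| ≤ ‖fderiv ℝ (pullbackMetric n q u) x y‖ :=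
        abs_entry_le_pi_norm _ i j
      exact h2.trans (((fderiv ℝ (pullbackMetric n q u) x).le_of_opNorm_le h1 y).trans
        (mul_le_mul_of_nonneg_left (mem_closedBall_zero_iff.1 hy) (by positivity)))
    have hfx : ∀ l, Continuous fun y => f l (x - y) := fun l =>
      (hf l).comp (continuous_const.sub continuous_id)
    have hH : (Mu * ε ^ α) ^ 2 = Mu ^ 2 * (S * ε) := by rw [mul_pow, hεα]
    constructor
    · have hest := abs_inner_sub_inner_integral_le hw.continuous hwc
        ((subset_tsupport w).trans hws) hw0 hw1 (hfx i) (hfx j) (hosc i) (hosc j)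
        (R := n ^ 2 * Mg * ε ^ 2 + n * Mg * ε) fun y hy => by
          have := abs_sub (inner ℝ (f i (x - y)) (f j (x - y)) - inner ℝ (f i x) (f j x) + T y)
            (T y)
          rw [add_sub_cancel_right] at this
          linarith [hTaylor y hy, hTy y hy]
      rw [hloc.eq_of_nhds, hgf x hxε]
      refine hest.trans ?_
      rw [hH]
      have h1 : ε ^ 2 ≤ S := by nlinarith
      have h2 : S * ε ≤ S := by nlinarith
      calc _ ≤ n ^ 2 * Mg * S + n * Mg * S + 2 * (Mu ^ 2 * S) := by gcongr
        _ = _ := by ring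
    · intro k
      obtain ⟨Li, hLi, hLi_apply⟩ := hasFDerivAt_convolution_left_apply hw hwc (hf i) x
      obtain ⟨Lj, hLj, hLj_apply⟩ := hasFDerivAt_convolution_left_apply hw hwc (hf j) x
      have hgd : DifferentiableAt ℝ (pullbackMetric n q u) x :=
        (hg.contDiffAt (hΩ.mem_nhds (hKr (hballε hxε)))).differentiableAt (by norm_num)
      have hmd : DifferentiableAt ℝ (pullbackMetric n q (mollifyV n q φ ε u)) x := by
        refine DifferentiableAt.congr_of_eventuallyEq ?_ hloc
        refine differentiableAt_pi.2 fun i' => differentiableAt_pi.2 fun j' => ?_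
        obtain ⟨_, hi, _⟩ := hasFDerivAt_convolution_left_apply hw hwc (hf i') x
        obtain ⟨_, hj, _⟩ := hasFDerivAt_convolution_left_apply hw hwc (hf j') x
        exact hi.differentiableAt.inner ℝ hj.differentiableAt
      have hentry : fderiv ℝ (pullbackMetric n q (mollifyV n q φ ε u)) x
          (EuclideanSpace.single k 1) i j =
          inner ℝ (∫ y, fderiv ℝ w y (EuclideanSpace.single k 1) • f i (x - y))
            (∫ y, w y • f j (x - y)) +
          inner ℝ (∫ y, w y • f i (x - y))
            (∫ y, fderiv ℝ w y (EuclideanSpace.single k 1) • f j (x - y)) := by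
        have h1 := hasFDerivAt_pi'.1 (hasFDerivAt_pi'.1 hmd.hasFDerivAt i) j
        have h2 := (hLi.inner ℝ hLj).congr_of_eventuallyEq
          (hloc.mono fun z hz => congrFun (congrFun hz i) j)
        have h3 := DFunLike.congr_fun (h1.unique h2) (EuclideanSpace.single k 1)
        rw [← hLi_apply, ← hLj_apply, add_comm]
        exact h3
      have hw' : Continuous fun y => fderiv ℝ w y (EuclideanSpace.single k 1) :=
        (hw.continuous_fderiv one_ne_zero).clm_apply continuous_const
      have hest := abs_sub_inner_integral_deriv_le hw.continuous hwc
        ((subset_tsupport w).trans hws) hw0 hw1 hw' (hwc.fderiv_apply ℝ _)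
        (((subset_tsupport _).trans (tsupport_fderiv_apply_subset ℝ _)).trans hws)
        (integral_fderiv_eq_zero_of_hasCompactSupport hw hwc _)
        (integral_fderiv_smul_clm hw hwc hw1 T (EuclideanSpace.single k 1))
        (hfx i) (hfx j) (hosc i) (hosc j) hTaylor
      have hψ := integral_norm_fderiv_mollifier_single_le hε hφ1 hφc k
      rw [fderiv_fun_sub hgd hmd, sub_apply, Pi.sub_apply, Pi.sub_apply,
        hentry]
      refine hest.trans ?_
      rw [hH]
      calc _ ≤ A / ε * (n ^ 2 * Mg * ε ^ 2 + 3 * (Mu ^ 2 * (S * ε))) := by gcongr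
        _ = A * (n ^ 2 * Mg * ε + 3 * Mu ^ 2 * S) := by field_simp
        _ ≤ A * (n ^ 2 * Mg * S + 3 * Mu ^ 2 * S) := by gcongr
        _ = _ := by ring
  have hC0 : 0 ≤ n ^ 2 * |Mg| + n * |Mg| + 2 * Mu ^ 2 := by positivity
  have hC1 : 0 ≤ A * (n ^ 2 * |Mg| + 3 * Mu ^ 2) := by positivity
  refine ⟨fun x hx => ?_, fun x hx k => ?_⟩
  · refine (pi_norm_le_iff_of_nonneg (by positivity)).2 fun i =>
      (pi_norm_le_iff_of_nonneg (by positivity)).2 fun j => ((key x hx i j).1).trans ?_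
    exact mul_le_mul_of_nonneg_right (by linarith) hS0.le
  · refine (pi_norm_le_iff_of_nonneg (by positivity)).2 fun i =>
      (pi_norm_le_iff_of_nonneg (by positivity)).2 fun j => ((key x hx i j).2 k).trans ?_
    exact mul_le_mul_of_nonneg_right (by linarith) hS0.le
end

section
/- Let Ω ⊆ ℝ^n be open and let u ∈ C¹(Ω, ℝ^q) be injective with Du(x) injective for every x ∈ Ω. Let K ⊂ Ω be compact. Then there exists ε* > 0 with ε* < dist(K, ℝ^n∖Ω) such that for every ε ∈ (0, ε*), the mollification u*φ_ε (which is defined and smooth on a neighborhood of K) is injective on K and D(u*φ_ε)(x) is injective for every x ∈ K; that is, the mollified map is again an embedding of K. -/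
open MeasureTheory Metric Function

open scoped Topology ContDiff Convolution

/-- A smooth nonnegative function of integral one supported in the closed `ε`-ball. -/
structure IsMollifierKernel {E : Type*} [NormedAddCommGroup E] [NormedSpace ℝ E]
    [MeasureSpace E] (ψ : E → ℝ) (ε : ℝ) : Prop where
  contDiff : ContDiff ℝ ∞ ψ
  nonneg : ∀ x, 0 ≤ ψ x
  integral_eq_one : ∫ x, ψ x = 1
  support_subset : support ψ ⊆ closedBall 0 ε

namespace IsMollifierKernel

variable {E F : Type*} [NormedAddCommGroup E] [InnerProductSpace ℝ E] [FiniteDimensional ℝ E]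
  [MeasurableSpace E] [BorelSpace E] [NormedAddCommGroup F] [NormedSpace ℝ F]
  {ψ : E → ℝ} {ε : ℝ}

theorem integrable (h : IsMollifierKernel ψ ε) : Integrable ψ :=
  .of_integral_ne_zero (by simp [h.integral_eq_one])

theorem hasCompactSupport (h : IsMollifierKernel ψ ε) : HasCompactSupport ψ :=
  .of_support_subset_isCompact (isCompact_closedBall 0 ε) h.support_subset

theorem integrable_smul (h : IsMollifierKernel ψ ε) {w : E → F}
    (hw : ContinuousOn w (closedBall 0 ε)) : Integrable fun y => ψ y • w y := by
  refine (integrableOn_iff_integrable_of_support_subset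
    ((support_smul_subset_left ψ w).trans h.support_subset)).1 ?_
  exact (h.contDiff.continuous.continuousOn.smul hw).integrableOn_compact
    (isCompact_closedBall _ _)

theorem integrable_smul_sub (h : IsMollifierKernel ψ ε) {u : E → F} {x : E}
    (hu : ContinuousOn u (closedBall x ε)) : Integrable fun y => ψ y • u (x - y) :=
  h.integrable_smul <| hu.comp (by fun_prop) fun y hy => by
    simpa [dist_eq_norm] using hy

theorem norm_integral_smul_le (h : IsMollifierKernel ψ ε) {w : E → F} {C : ℝ}
    (hw : ∀ y ∈ closedBall 0 ε, ‖w y‖ ≤ C) : ‖∫ y, ψ y • w y‖ ≤ C := by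
  calc ‖∫ y, ψ y • w y‖ ≤ ∫ y, ψ y * C := by
        refine norm_integral_le_of_norm_le (h.integrable.mul_const C) (.of_forall fun y => ?_)
        rw [norm_smul, Real.norm_of_nonneg (h.nonneg y)]
        by_cases hy : ψ y = 0
        · simp [hy]
        · exact mul_le_mul_of_nonneg_left (hw y (h.support_subset hy)) (h.nonneg y)
    _ = C := by rw [integral_mul_const, h.integral_eq_one, one_mul]

variable {u : E → F} {x y : E}

theorem differentiableAt_integral_smul (h : IsMollifierKernel ψ ε) {R : ℝ} (hR : ε < R)
    (hu : ContinuousOn u (closedBall x R)) :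
    DifferentiableAt ℝ (fun x' => ∫ z, ψ z • u (x' - z)) x := by
  set v := (closedBall x R).indicator u
  have hv : Integrable v :=
    (hu.integrableOn_compact (isCompact_closedBall x R)).integrable_indicator
      isClosed_closedBall.measurableSet
  have hd : ContDiff ℝ ∞ (ψ ⋆[ContinuousLinearMap.lsmul ℝ ℝ] v) :=
    h.hasCompactSupport.contDiff_convolution_left _ h.contDiff hv.locallyIntegrable
  refine (hd.differentiable (by simp) x).congr_of_eventuallyEq ?_
  filter_upwards [ball_mem_nhds x (sub_pos.2 hR)] with x' hx'
  refine integral_congr_ae (.of_forall fun z => ?_)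
  by_cases hz : ψ z = 0
  · simp [hz]
  · have hz' : ‖z‖ ≤ ε := by simpa using h.support_subset hz
    have hmem : x' - z ∈ closedBall x R := by
      rw [mem_ball, dist_eq_norm] at hx'
      rw [mem_closedBall, dist_eq_norm, sub_right_comm]
      linarith [norm_sub_le (x' - x) z]
    simp [v, Set.indicator_of_mem hmem]

variable [CompleteSpace F]

theorem norm_integral_smul_sub_sub_le (h : IsMollifierKernel ψ ε) {a : F} {C : ℝ}
    (hu : ContinuousOn u (closedBall x ε)) (hC : ∀ z ∈ closedBall x ε, ‖u z - a‖ ≤ C) :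
    ‖(∫ z, ψ z • u (x - z)) - a‖ ≤ C := by
  have key : (∫ z, ψ z • u (x - z)) - a = ∫ z, ψ z • (u (x - z) - a) := by
    simp_rw [smul_sub]
    rw [integral_sub (h.integrable_smul_sub hu) (h.integrable.smul_const a),
      integral_smul_const, h.integral_eq_one, one_smul]
  rw [key]
  refine h.norm_integral_smul_le fun z hz => hC _ ?_
  simpa [dist_eq_norm] using hz

/-- Mollification preserves approximate linearity, with the same constant. -/
theorem norm_integral_smul_sub_sub_map_le (h : IsMollifierKernel ψ ε) {A : E →L[ℝ] F}
    {s : Set E} {c : NNReal} (hA : ApproximatesLinearOn u A s c) (hu : ContinuousOn u s)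
    (hx : closedBall x ε ⊆ s) (hy : closedBall y ε ⊆ s) :
    ‖(∫ z, ψ z • u (x - z)) - (∫ z, ψ z • u (y - z)) - A (x - y)‖ ≤ c * ‖x - y‖ := by
  have hix := h.integrable_smul_sub (hu.mono hx)
  have hiy := h.integrable_smul_sub (hu.mono hy)
  have key : (∫ z, ψ z • u (x - z)) - (∫ z, ψ z • u (y - z)) - A (x - y) =
      ∫ z, ψ z • (u (x - z) - u (y - z) - A (x - y)) := by
    simp_rw [smul_sub]
    rw [integral_sub (by exact hix.sub hiy) (h.integrable.smul_const _), integral_sub hix hiy,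
      integral_smul_const, h.integral_eq_one, one_smul]
  rw [key]
  refine h.norm_integral_smul_le fun z hz => ?_
  have := hA (x - z) (hx (by simpa [dist_eq_norm] using hz))
    (y - z) (hy (by simpa [dist_eq_norm] using hz))
  rwa [sub_sub_sub_cancel_right] at this

end IsMollifierKernel

/-- A rescaled mollifier is a mollifier kernel at the corresponding scale. -/
theorem isMollifierKernel_rescale {n : ℕ} {φ : EuclideanSpace ℝ (Fin n) → ℝ}
    (h : IsMollifierKernel φ 1) {ε : ℝ} (hε : 0 < ε) :
    IsMollifierKernel (fun y => (ε ^ n)⁻¹ * φ (ε⁻¹ • y)) ε where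
  contDiff := contDiff_const.mul (h.contDiff.comp (contDiff_const_smul _))
  nonneg y := mul_nonneg (by positivity) (h.nonneg _)
  integral_eq_one := by
    rw [integral_const_mul, Measure.integral_comp_inv_smul_of_nonneg _ _ hε.le,
      h.integral_eq_one]
    simp [hε.ne']
  support_subset y hy := by
    have := h.support_subset (right_ne_zero_of_mul hy)
    rw [mem_closedBall_zero_iff, norm_smul, norm_inv, Real.norm_of_nonneg hε.le,
      inv_mul_le_iff₀ hε, mul_one] at this
    simpa using this

/-- If `f` has injective strict derivative at `x₀`, it is uniformly close to an injective linear
map near `x₀`. -/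
theorem HasStrictFDerivAt.exists_ball_approximatesLinearOn {E F : Type*}
    [NormedAddCommGroup E] [NormedSpace ℝ E] [FiniteDimensional ℝ E]
    [NormedAddCommGroup F] [NormedSpace ℝ F] {f : E → F} {A : E →L[ℝ] F} {x₀ : E}
    (hf : HasStrictFDerivAt f A x₀) (hA : Injective A) :
    ∃ c : NNReal, (∀ v, ‖A v‖ ≤ c * ‖v‖ → v = 0) ∧
      ∃ r > 0, ApproximatesLinearOn f A (ball x₀ r) c := by
  obtain ⟨k, hk, hAk⟩ := LinearMap.exists_antilipschitzWith (A : E →ₗ[ℝ] F)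
    (LinearMap.ker_eq_bot.2 hA)
  have hc : 0 < (2 * k)⁻¹ := by positivity
  obtain ⟨s, hs, hfs⟩ := hf.approximates_deriv_on_nhds (.inr hc)
  obtain ⟨r, hr, hrs⟩ := Metric.mem_nhds_iff.1 hs
  refine ⟨_, fun v hv => ?_, r, hr, hfs.mono_set hrs⟩
  have hkv : ‖v‖ ≤ k * ‖A v‖ := by simpa using hAk.le_mul_dist v 0
  have hk' : (0 : ℝ) < k := hk
  have : (k : ℝ) * ‖A v‖ ≤ ‖v‖ / 2 := by
    calc (k : ℝ) * ‖A v‖ ≤ k * (((2 * k)⁻¹ : NNReal) * ‖v‖) := by gcongr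
      _ = ‖v‖ / 2 := by push_cast; field_simp
  exact norm_le_zero_iff.1 (by linarith)

theorem eventually_mollifyV_ne {n q : ℕ} {φ : EuclideanSpace ℝ (Fin n) → ℝ}
    (hφ : IsMollifierKernel φ 1) {Ω : Set (EuclideanSpace ℝ (Fin n))}
    {u : EuclideanSpace ℝ (Fin n) → EuclideanSpace ℝ (Fin q)} (hΩ : IsOpen Ω)
    (hu : ContinuousOn u Ω) {x y : EuclideanSpace ℝ (Fin n)} (hx : x ∈ Ω) (hy : y ∈ Ω)
    (hxy : u x ≠ u y) :
    ∀ᶠ p : ℝ × EuclideanSpace ℝ (Fin n) × EuclideanSpace ℝ (Fin n) in 𝓝 (0, x, y),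
      0 < p.1 → mollifyV n q φ p.1 u p.2.1 ≠ mollifyV n q φ p.1 u p.2.2 := by
  set d := dist (u x) (u y)
  have hd0 : 0 < d := dist_pos.2 hxy
  have aux : ∀ a ∈ Ω, ∃ r > 0, ∀ ε, 0 < ε → ε < r → ∀ b ∈ ball a r,
      ‖mollifyV n q φ ε u b - u a‖ ≤ d / 3 := by
    intro a ha
    obtain ⟨r, hr, hball⟩ := Metric.mem_nhds_iff.1 (Filter.inter_mem (hΩ.mem_nhds ha)
      ((hu.continuousAt (hΩ.mem_nhds ha)).preimage_mem_nhds
        (closedBall_mem_nhds (u a) (show 0 < d / 3 by positivity))))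
    refine ⟨r / 2, by positivity, fun ε hε hεr b hb => ?_⟩
    have hsub : closedBall b ε ⊆ ball a r :=
      closedBall_subset_ball' (by rw [mem_ball] at hb; linarith)
    refine (isMollifierKernel_rescale hφ hε).norm_integral_smul_sub_sub_le
      (hu.mono fun z hz => (hball (hsub hz)).1) fun z hz => ?_
    simpa [dist_eq_norm] using (hball (hsub hz)).2
  obtain ⟨r₁, hr₁, h₁⟩ := aux x hx
  obtain ⟨r₂, hr₂, h₂⟩ := aux y hy
  have hev := prod_mem_nhds (Iio_mem_nhds (lt_min hr₁ hr₂))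
    (prod_mem_nhds (ball_mem_nhds x hr₁) (ball_mem_nhds y hr₂))
  filter_upwards [hev] with p ⟨hp₁, hp₂, hp₃⟩ hp heq
  have e₁ := h₁ p.1 hp (lt_of_lt_of_le hp₁ (min_le_left _ _)) _ hp₂
  have e₂ := h₂ p.1 hp (lt_of_lt_of_le hp₁ (min_le_right _ _)) _ hp₃
  rw [← dist_eq_norm] at e₁ e₂
  rw [← heq] at e₂
  linarith [dist_triangle_left (u x) (u y) (mollifyV n q φ p.1 u p.2.1)]

theorem exists_mollifyV_injOn_ball_and_injective_fderiv {n q : ℕ}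
    {φ : EuclideanSpace ℝ (Fin n) → ℝ}
    (hφ : IsMollifierKernel φ 1) {Ω : Set (EuclideanSpace ℝ (Fin n))}
    {u : EuclideanSpace ℝ (Fin n) → EuclideanSpace ℝ (Fin q)} (hΩ : IsOpen Ω)
    (hu : ContDiffOn ℝ 1 u Ω) {x₀ : EuclideanSpace ℝ (Fin n)} (hx₀ : x₀ ∈ Ω)
    (himm : Injective (fderiv ℝ u x₀)) :
    ∃ r > 0, ∀ ε, 0 < ε → ε < r → Set.InjOn (mollifyV n q φ ε u) (ball x₀ r) ∧
      ∀ x ∈ ball x₀ r, Injective (fderiv ℝ (mollifyV n q φ ε u) x) := by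
  obtain ⟨c, hc, r₁, hr₁, happ⟩ :=
    ((hu.contDiffAt (hΩ.mem_nhds hx₀)).hasStrictFDerivAt
      one_ne_zero).exists_ball_approximatesLinearOn himm
  set A := fderiv ℝ u x₀
  obtain ⟨r₂, hr₂, hball⟩ := Metric.mem_nhds_iff.1 (hΩ.mem_nhds hx₀)
  set r := min r₁ r₂
  have hr : 0 < r := lt_min hr₁ hr₂
  have happ' := happ.mono_set (ball_subset_ball (min_le_left r₁ r₂))
  have hcont : ContinuousOn u (ball x₀ r) :=
    hu.continuousOn.mono ((ball_subset_ball (min_le_right r₁ r₂)).trans hball)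
  refine ⟨r / 2, by positivity, fun ε hε hεr => ?_⟩
  have hker := isMollifierKernel_rescale hφ hε
  have hsub : ∀ x ∈ ball x₀ (r / 2), closedBall x (r / 2) ⊆ ball x₀ r := fun x hx =>
    closedBall_subset_ball' (by rw [mem_ball] at hx; linarith)
  have hlip : ∀ x ∈ ball x₀ (r / 2), ∀ y ∈ ball x₀ (r / 2),
      ‖mollifyV n q φ ε u x - mollifyV n q φ ε u y - A (x - y)‖ ≤ c * ‖x - y‖ :=
    fun x hx y hy => hker.norm_integral_smul_sub_sub_map_le happ' hcont
      ((closedBall_subset_closedBall hεr.le).trans (hsub x hx))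
      ((closedBall_subset_closedBall hεr.le).trans (hsub y hy))
  refine ⟨fun x hx y hy hxy => ?_, fun x hx => ?_⟩
  · have := hlip x hx y hy
    rw [hxy, sub_self, zero_sub, norm_neg] at this
    exact sub_eq_zero.1 (hc _ this)
  · have hdiff : DifferentiableAt ℝ (mollifyV n q φ ε u) x :=
      hker.differentiableAt_integral_smul hεr (hcont.mono (hsub x hx))
    set L := fderiv ℝ (mollifyV n q φ ε u) x
    have hLA : ‖L - A‖ ≤ c := by
      refine (hdiff.hasFDerivAt.sub A.hasFDerivAt).le_of_lip' c.2 ?_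
      filter_upwards [isOpen_ball.mem_nhds hx] with y hy
      simpa [sub_sub_sub_comm] using hlip y hy x hx
    refine (injective_iff_map_eq_zero L).2 fun v hv => hc v ?_
    calc ‖A v‖ = ‖(L - A) v‖ := by simp [hv]
      _ ≤ c * ‖v‖ := (L - A).le_of_opNorm_le hLA v

/-- let `u ∈ C¹(Ω, ℝ^q)` be injective with injective differential everywhere
on the open set `Ω`, and let `K ⊂ Ω` be compact.  Then there is `ε* > 0`, smaller than the
distance from `K` to the complement of `Ω` (expressed by: the closed `ε*`-balls around
points of `K` lie in `Ω`), such that for `0 < ε < ε*` the mollification `u*φ_ε` is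
injective on `K` with injective differential at every point of `K`; i.e. it is again an
embedding of `K`. -/
theorem mollified_map_is_embedding
    (n q : ℕ) (hn : 1 ≤ n) (hq : 1 ≤ q)
    (φ : EuclideanSpace ℝ (Fin n) → ℝ)
    (hφ_smooth : ContDiff ℝ (⊤ : ℕ∞) φ)
    (hφ_supp : Function.support φ ⊆ Metric.closedBall 0 1)
    (hφ_nonneg : ∀ x, 0 ≤ φ x)
    (hφ_int : ∫ x, φ x = 1)
    (Ω K : Set (EuclideanSpace ℝ (Fin n)))
    (u : EuclideanSpace ℝ (Fin n) → EuclideanSpace ℝ (Fin q))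
    (hΩ : IsOpen Ω) (hK : IsCompact K) (hKΩ : K ⊆ Ω)
    (hu : ContDiffOn ℝ 1 u Ω)
    (huinj : Set.InjOn u Ω)
    (huimm : ∀ x ∈ Ω, Function.Injective (fderiv ℝ u x)) :
    ∃ εstar : ℝ, 0 < εstar ∧ (∀ x ∈ K, Metric.closedBall x εstar ⊆ Ω) ∧
      ∀ ε : ℝ, 0 < ε → ε < εstar →
        Set.InjOn (mollifyV n q φ ε u) K ∧
        ∀ x ∈ K, Function.Injective (fderiv ℝ (mollifyV n q φ ε u) x) := by
  have hφ : IsMollifierKernel φ 1 := ⟨hφ_smooth, hφ_nonneg, hφ_int, hφ_supp⟩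
  have hloc := fun x (hx : x ∈ K) => exists_mollifyV_injOn_ball_and_injective_fderiv hφ hΩ hu
    (hKΩ hx) (huimm x (hKΩ hx))
  have himm : ∀ᶠ ε in 𝓝 (0 : ℝ), ∀ x ∈ K,
      0 < ε → Injective (fderiv ℝ (mollifyV n q φ ε u) x) := by
    refine hK.eventually_forall_of_forall_eventually fun x hx => ?_
    obtain ⟨r, hr, h⟩ := hloc x hx
    filter_upwards [prod_mem_nhds (Iio_mem_nhds hr) (ball_mem_nhds x hr)]
      with p ⟨hp₁, hp₂⟩ hp
    exact (h p.1 hp hp₁).2 _ hp₂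
  have hinj : ∀ᶠ ε in 𝓝 (0 : ℝ), ∀ p ∈ K ×ˢ K,
      0 < ε → mollifyV n q φ ε u p.1 = mollifyV n q φ ε u p.2 → p.1 = p.2 := by
    refine (hK.prod hK).eventually_forall_of_forall_eventually ?_
    rintro ⟨x, y⟩ ⟨hx, hy⟩
    rcases eq_or_ne x y with rfl | hxy
    · obtain ⟨r, hr, h⟩ := hloc x hx
      filter_upwards [prod_mem_nhds (Iio_mem_nhds hr)
        (prod_mem_nhds (ball_mem_nhds x hr) (ball_mem_nhds x hr))]
        with p ⟨hp₁, hp₂, hp₃⟩ hp heq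
      exact (h p.1 hp hp₁).1 hp₂ hp₃ heq
    · filter_upwards [eventually_mollifyV_ne hφ hΩ hu.continuousOn (hKΩ hx) (hKΩ hy)
        (huinj.ne (hKΩ hx) (hKΩ hy) hxy)] with p hp hp0 heq
      exact absurd heq (hp hp0)
  obtain ⟨δ, hδ, hδΩ⟩ := hK.exists_cthickening_subset_open hΩ hKΩ
  obtain ⟨η, hη, hηball⟩ := Metric.eventually_nhds_iff.1 (himm.and hinj)
  refine ⟨min δ η, lt_min hδ hη, fun x hx => ?_, fun ε hε hlt => ?_⟩
  · exact (closedBall_subset_closedBall (min_le_left δ η)).trans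
      ((closedBall_subset_cthickening hx δ).trans hδΩ)
  · obtain ⟨h₁, h₂⟩ := hηball (y := ε) <| by
      simpa [abs_of_pos hε] using hlt.trans_le (min_le_right δ η)
    exact ⟨fun x hx y hy hxy => h₂ (x, y) ⟨hx, hy⟩ hε hxy, fun x hx => h₁ x hx hε⟩
end

section
/- Let Ω ⊆ ℝ^n be open and let u ∈ C^∞(Ω, ℝ^q) be an immersion with pullback metric g = (Du)ᵀDu and tangential projection P(x) = Du(x) g(x)^{−1} Du(x)ᵀ. For f ∈ C^∞(ℝ^q) and a ∈ {1,…,q} define φ_a : Ω → ℝ by φ_a(x) = (P(x)e_a) · ∇f(u(x)) and v_a : Ω → ℝ^n by v_a(x) = g(x)^{−1} Du(x)ᵀ e_a (so that Du(x)v_a(x) = P(x)e_a). Then for every x ∈ Ω, Σ_{a=1}^q Σ_{i=1}^n v_a^i(x) ∂_i φ_a(x) = Δ_g(f∘u)(x); that is, the sum over a of the second derivatives of f along the tangential projections of the coordinate directions equals the Laplace–Beltrami operator of the induced metric applied to f∘u. -/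
open Matrix Function

/-- The differential of `u : ℝ^n → ℝ^q` at `x`, written as the `q × n` Jacobian matrix
`(Du)_{a i} = ∂_i u^a`. -/
noncomputable def Dmat (n q : ℕ)
    (u : EuclideanSpace ℝ (Fin n) → EuclideanSpace ℝ (Fin q))
    (x : EuclideanSpace ℝ (Fin n)) : Matrix (Fin q) (Fin n) ℝ :=
  Matrix.of fun a i => fderiv ℝ u x (EuclideanSpace.single i 1) a

/-- The pullback metric `g = (Du)ᵀ Du`, with entries `g_{ij} = Σ_a ∂_i u^a ∂_j u^a`. -/
noncomputable def pullbackG (n q : ℕ)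
    (u : EuclideanSpace ℝ (Fin n) → EuclideanSpace ℝ (Fin q))
    (x : EuclideanSpace ℝ (Fin n)) : Matrix (Fin n) (Fin n) ℝ :=
  (Dmat n q u x)ᵀ * Dmat n q u x

/-- The tangential projection `P(x) = Du(x) g(x)⁻¹ Du(x)ᵀ`, the orthogonal projection of
`ℝ^q` onto the tangent space `Du(x)(ℝ^n)`. -/
noncomputable def tangP (n q : ℕ)
    (u : EuclideanSpace ℝ (Fin n) → EuclideanSpace ℝ (Fin q))
    (x : EuclideanSpace ℝ (Fin n)) : Matrix (Fin q) (Fin q) ℝ :=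
  Dmat n q u x * (pullbackG n q u x)⁻¹ * (Dmat n q u x)ᵀ

/-- The Laplace–Beltrami operator of a matrix field `g` (a Riemannian metric in
coordinates) acting on a function `F`:
`Δ_g F = |g|^{-1/2} Σ_{i,j} ∂_i (|g|^{1/2} g^{ij} ∂_j F)`. -/
noncomputable def laplaceBeltrami (n : ℕ)
    (g : EuclideanSpace ℝ (Fin n) → Matrix (Fin n) (Fin n) ℝ)
    (F : EuclideanSpace ℝ (Fin n) → ℝ) (x : EuclideanSpace ℝ (Fin n)) : ℝ :=
  (Real.sqrt (g x).det)⁻¹ *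
    ∑ i : Fin n,
      fderiv ℝ (fun y => Real.sqrt (g y).det *
          ∑ j : Fin n, (g y)⁻¹ i j * fderiv ℝ F y (EuclideanSpace.single j 1)) x
        (EuclideanSpace.single i 1)

section MatrixCalculus

variable {E : Type*} [NormedAddCommGroup E] [NormedSpace ℝ E] {m : Type*} [Fintype m]
  [DecidableEq m] {A : E → Matrix m m ℝ} {x : E}

/-- **Jacobi's formula** for the derivative of the determinant of a matrix field. -/
theorem hasFDerivAt_det_matrix (hA : ∀ i j, DifferentiableAt ℝ (fun y => A y i j) x) :
    HasFDerivAt (fun y => (A y).det)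
      (∑ i, ∑ j, (A x).adjugate j i • fderiv ℝ (fun y => A y i j) x) x := by
  let δ : ContinuousMultilinearMap ℝ (fun _ : m => m → ℝ) ℝ :=
    { (Matrix.detRowAlternating (R := ℝ) (n := m)).toMultilinearMap with
      cont := Continuous.matrix_det (A := fun M : m → m → ℝ => Matrix.of M) continuous_id }
  have hrows : HasFDerivAt (fun y => (fun i j => A y i j : m → m → ℝ))
      (ContinuousLinearMap.pi fun i => ContinuousLinearMap.pi fun j =>
        fderiv ℝ (fun y => A y i j) x) x :=
    hasFDerivAt_pi.2 fun i => hasFDerivAt_pi.2 fun j => (hA i j).hasFDerivAt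
  refine ((δ.hasFDerivAt (fun i j => A x i j)).comp x hrows).congr_fderiv ?_
  ext v
  simp only [ContinuousLinearMap.comp_apply, ContinuousMultilinearMap.linearDeriv_apply,
    FunLike.coe_sum, Finset.sum_apply, _root_.smul_apply, smul_eq_mul]
  refine Finset.sum_congr rfl fun i _ => ?_
  change ((A x).updateRow i fun j => fderiv ℝ (fun y => A y i j) x v).det = _
  rw [← Matrix.cramer_transpose_apply, Matrix.cramer_eq_adjugate_mulVec,
    ← Matrix.adjugate_transpose]
  simp [Matrix.mulVec, dotProduct]

theorem DifferentiableAt.matrix_det (hA : ∀ i j, DifferentiableAt ℝ (fun y => A y i j) x) :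
    DifferentiableAt ℝ (fun y => (A y).det) x :=
  (hasFDerivAt_det_matrix hA).differentiableAt

theorem DifferentiableAt.matrix_inv_apply (hA : ∀ i j, DifferentiableAt ℝ (fun y => A y i j) x)
    (hdet : (A x).det ≠ 0) (i j : m) : DifferentiableAt ℝ (fun y => (A y)⁻¹ i j) x := by
  simp only [Matrix.inv_def, Ring.inverse_eq_inv', Matrix.smul_apply, smul_eq_mul,
    Matrix.adjugate_apply]
  refine ((DifferentiableAt.matrix_det hA).inv hdet).mul (DifferentiableAt.matrix_det fun k l => ?_)
  by_cases h : k = j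
  · subst h
    simp
  · simpa [Matrix.updateRow_ne h] using hA k l

/-- The logarithmic derivative of the volume density `√(det A)` is `½ tr (A⁻¹ ∂A)`. -/
theorem fderiv_sqrt_det (hA : ∀ i j, DifferentiableAt ℝ (fun y => A y i j) x)
    (hdet : 0 < (A x).det) (v : E) :
    fderiv ℝ (fun y => √(A y).det) x v =
      √(A x).det * (2⁻¹ * ∑ i, ∑ j, (A x)⁻¹ j i * fderiv ℝ (fun y => A y i j) x v) := by
  rw [((hasFDerivAt_det_matrix hA).sqrt hdet.ne').fderiv]
  have hs : √(A x).det ≠ 0 := (Real.sqrt_pos.2 hdet).ne'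
  simp only [_root_.smul_apply, FunLike.coe_sum, Finset.sum_apply, smul_eq_mul,
    Matrix.inv_def, Ring.inverse_eq_inv', Matrix.smul_apply, mul_assoc, ← Finset.mul_sum]
  generalize ∑ i, ∑ j, (A x).adjugate j i * fderiv ℝ (fun y => A y i j) x v = t
  have hd := hdet.ne'
  field_simp
  rw [Real.sq_sqrt hdet.le, mul_comm]

end MatrixCalculus

section PullbackMetric

variable {n q : ℕ} {u : EuclideanSpace ℝ (Fin n) → EuclideanSpace ℝ (Fin q)}
  {x : EuclideanSpace ℝ (Fin n)}

theorem Dmat_mulVec (v : EuclideanSpace ℝ (Fin n)) :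
    Dmat n q u x *ᵥ v.ofLp = (fderiv ℝ u x v).ofLp := by
  ext a
  conv_rhs => rw [← (EuclideanSpace.basisFun (Fin n) ℝ).sum_repr v]
  simp [Dmat, Matrix.mulVec, dotProduct, mul_comm]

theorem pullbackG_posDef (h : Function.Injective (fderiv ℝ u x)) : (pullbackG n q u x).PosDef := by
  have hinj : Function.Injective (Dmat n q u x).mulVec := fun v w hvw => by
    have := Dmat_mulVec (u := u) (x := x) (WithLp.toLp 2 v)
    have := Dmat_mulVec (u := u) (x := x) (WithLp.toLp 2 w)
    simp_all only
    exact WithLp.toLp_injective 2 (h (WithLp.ofLp_injective 2 (by simp_all)))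
  simpa [pullbackG, Matrix.conjTranspose_eq_transpose_of_trivial] using
    Matrix.PosDef.conjTranspose_mul_self _ hinj

theorem hasFDerivAt_Dmat (hu : ContDiffAt ℝ 2 u x) (a : Fin q) (i : Fin n) :
    HasFDerivAt (fun y => Dmat n q u y a i)
      ((EuclideanSpace.proj a).comp
        ((fderiv ℝ (fderiv ℝ u) x).flip (EuclideanSpace.single i 1))) x := by
  have h : DifferentiableAt ℝ (fderiv ℝ u) x :=
    (hu.fderiv_right (m := 1) (by norm_num)).differentiableAt (by norm_num)
  have h2 := h.hasFDerivAt.clm_apply (hasFDerivAt_const (EuclideanSpace.single i (1 : ℝ)) x)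
  refine ((EuclideanSpace.proj (𝕜 := ℝ) a).hasFDerivAt.comp x h2).congr_fderiv ?_
  ext v
  simp

theorem fderiv_Dmat_comm (hu : ContDiffAt ℝ 2 u x) (a : Fin q) (i k : Fin n) :
    fderiv ℝ (fun y => Dmat n q u y a k) x (EuclideanSpace.single i 1) =
      fderiv ℝ (fun y => Dmat n q u y a i) x (EuclideanSpace.single k 1) := by
  have hs := hu.isSymmSndFDerivAt (by simp)
  rw [(hasFDerivAt_Dmat hu a k).fderiv, (hasFDerivAt_Dmat hu a i).fderiv]
  simp [hs.eq (EuclideanSpace.single i 1) (EuclideanSpace.single k 1)]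

theorem pullbackG_inv_symm (i j : Fin n) :
    (pullbackG n q u x)⁻¹ i j = (pullbackG n q u x)⁻¹ j i := by
  have h : ((pullbackG n q u x)⁻¹)ᵀ = (pullbackG n q u x)⁻¹ := by
    rw [Matrix.transpose_nonsing_inv]
    simp [pullbackG]
  exact congrFun (congrFun h j) i

theorem differentiableAt_pullbackG (hu : ContDiffAt ℝ 2 u x) (i j : Fin n) :
    DifferentiableAt ℝ (fun y => pullbackG n q u y i j) x := by
  simp only [pullbackG, Matrix.mul_apply, Matrix.transpose_apply]
  exact DifferentiableAt.fun_sum fun a _ =>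
    (hasFDerivAt_Dmat hu a i).differentiableAt.mul (hasFDerivAt_Dmat hu a j).differentiableAt

theorem fderiv_pullbackG (hu : ContDiffAt ℝ 2 u x) (i j : Fin n) (v : EuclideanSpace ℝ (Fin n)) :
    fderiv ℝ (fun y => pullbackG n q u y i j) x v =
      ∑ a, (Dmat n q u x a i * fderiv ℝ (fun y => Dmat n q u y a j) x v +
        Dmat n q u x a j * fderiv ℝ (fun y => Dmat n q u y a i) x v) := by
  have hd a i := (hasFDerivAt_Dmat hu a i).differentiableAt
  simp only [pullbackG, Matrix.mul_apply, Matrix.transpose_apply]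
  rw [fderiv_fun_sum fun a _ => (hd a i).fun_mul (hd a j)]
  simp [fderiv_fun_mul (hd _ i) (hd _ j)]

/-- `∂_k √|g| = √|g| Σ_{a,i} v_a^i ∂_i ∂_k u^a`. -/
theorem fderiv_sqrt_det_pullbackG (hu : ContDiffAt ℝ 2 u x)
    (h : Function.Injective (fderiv ℝ u x)) (k : Fin n) :
    fderiv ℝ (fun y => √(pullbackG n q u y).det) x (EuclideanSpace.single k 1) =
      √(pullbackG n q u x).det * ∑ a, ∑ i,
        (∑ j, (pullbackG n q u x)⁻¹ i j * Dmat n q u x a j) *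
          fderiv ℝ (fun y => Dmat n q u y a k) x (EuclideanSpace.single i 1) := by
  rw [fderiv_sqrt_det (differentiableAt_pullbackG hu) (pullbackG_posDef h).det_pos]
  congr 1
  simp only [fderiv_pullbackG hu, fun a i => fderiv_Dmat_comm hu a i k, Finset.mul_sum,
    Finset.sum_mul, mul_add, Finset.sum_add_distrib]
  have h1 : ∑ i, ∑ j, ∑ a, 2⁻¹ * ((pullbackG n q u x)⁻¹ j i * (Dmat n q u x a i *
      fderiv ℝ (fun y => Dmat n q u y a j) x (EuclideanSpace.single k 1))) =
      ∑ i, ∑ j, ∑ a, 2⁻¹ * ((pullbackG n q u x)⁻¹ j i * (Dmat n q u x a j *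
      fderiv ℝ (fun y => Dmat n q u y a i) x (EuclideanSpace.single k 1))) := by
    rw [Finset.sum_comm]
    simp only [fun i j => pullbackG_inv_symm (u := u) (x := x) i j]
  rw [h1]
  simp only [← Finset.sum_add_distrib]
  rw [Finset.sum_comm (s := (Finset.univ : Finset (Fin q)))]
  refine Finset.sum_congr rfl fun i _ => ?_
  rw [Finset.sum_comm]
  refine Finset.sum_congr rfl fun a _ => Finset.sum_congr rfl fun j _ => ?_
  rw [pullbackG_inv_symm i j]
  ring

theorem fderiv_comp_eq_sum_Dmat {f : EuclideanSpace ℝ (Fin q) → ℝ}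
    (hf : DifferentiableAt ℝ f (u x)) (hu : DifferentiableAt ℝ u x) (j : Fin n) :
    fderiv ℝ (f ∘ u) x (EuclideanSpace.single j 1) =
      ∑ b, Dmat n q u x b j * fderiv ℝ f (u x) (EuclideanSpace.single b 1) := by
  rw [fderiv_comp x hf hu, ContinuousLinearMap.comp_apply,
    ← (EuclideanSpace.basisFun (Fin q) ℝ).sum_repr (fderiv ℝ u x (EuclideanSpace.single j 1))]
  simp [Dmat]

theorem sum_inv_mul_Dmat_mul_Dmat (h : Function.Injective (fderiv ℝ u x)) (i k : Fin n) :
    ∑ a, (∑ j, (pullbackG n q u x)⁻¹ i j * Dmat n q u x a j) * Dmat n q u x a k =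
      if i = k then 1 else 0 := by
  have hinv : (pullbackG n q u x)⁻¹ * (Dmat n q u x)ᵀ * Dmat n q u x = 1 := by
    rw [Matrix.mul_assoc]
    exact Matrix.nonsing_inv_mul _ (pullbackG_posDef h).det_pos.ne'.isUnit
  simpa [Matrix.mul_apply, Matrix.one_apply] using congrFun (congrFun hinv i) k

theorem sum_tangP_mul_fderiv {f : EuclideanSpace ℝ (Fin q) → ℝ}
    (hf : DifferentiableAt ℝ f (u x)) (hu : DifferentiableAt ℝ u x) (a : Fin q) :
    ∑ b, tangP n q u x b a * fderiv ℝ f (u x) (EuclideanSpace.single b 1) =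
      ∑ k, Dmat n q u x a k *
        ∑ j, (pullbackG n q u x)⁻¹ k j * fderiv ℝ (f ∘ u) x (EuclideanSpace.single j 1) := by
  simp only [tangP, Matrix.mul_apply, Matrix.transpose_apply, fderiv_comp_eq_sum_Dmat hf hu,
    Finset.mul_sum, Finset.sum_mul]
  rw [Finset.sum_comm]
  refine Finset.sum_congr rfl fun k _ => ?_
  rw [Finset.sum_comm]
  refine Finset.sum_congr rfl fun j _ => Finset.sum_congr rfl fun b _ => ?_
  rw [pullbackG_inv_symm k j]
  ring

end PullbackMetric

/-- for a `C^∞` immersion `u : Ω → ℝ^q` with pullback metric `g = (Du)ᵀDu`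
and tangential projection `P = Du g⁻¹ Duᵀ`, setting `φ_a(x) = (P(x)e_a)·∇f(u(x))` and
`v_a(x) = g(x)⁻¹ Du(x)ᵀ e_a`, one has
`Σ_a Σ_i v_a^i ∂_i φ_a = Δ_g (f∘u)` on `Ω`, for every `f ∈ C^∞(ℝ^q)`. -/
theorem sum_second_tangential_derivatives_eq_laplaceBeltrami
    (n q : ℕ) (hn : 1 ≤ n) (hq : 1 ≤ q)
    (Ω : Set (EuclideanSpace ℝ (Fin n)))
    (u : EuclideanSpace ℝ (Fin n) → EuclideanSpace ℝ (Fin q))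
    (hΩ : IsOpen Ω)
    (hu : ContDiffOn ℝ (⊤ : ℕ∞) u Ω)
    (huimm : ∀ x ∈ Ω, Function.Injective (fderiv ℝ u x))
    (f : EuclideanSpace ℝ (Fin q) → ℝ)
    (hf : ContDiff ℝ (⊤ : ℕ∞) f) :
    ∀ x ∈ Ω,
      ∑ a : Fin q, ∑ i : Fin n,
        (∑ j : Fin n, (pullbackG n q u x)⁻¹ i j * Dmat n q u x a j)
          * fderiv ℝ (fun y => ∑ b : Fin q,
              tangP n q u y b a * fderiv ℝ f (u y) (EuclideanSpace.single b 1)) x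
            (EuclideanSpace.single i 1)
      = laplaceBeltrami n (pullbackG n q u) (f ∘ u) x := by
  intro x hx
  have hu2 : ∀ y ∈ Ω, ContDiffAt ℝ 2 u y := fun y hy =>
    (hu.contDiffAt (hΩ.mem_nhds hy)).of_le (WithTop.coe_le_coe.2 (le_top : (2 : ℕ∞) ≤ ⊤))
  have hud : ∀ y ∈ Ω, DifferentiableAt ℝ u y := fun y hy =>
    (hu2 y hy).differentiableAt (by norm_num)
  have hfd : Differentiable ℝ f := hf.differentiable (by simp)
  have hD a k := (hasFDerivAt_Dmat (hu2 x hx) a k).differentiableAt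
  have hdet := (pullbackG_posDef (huimm x hx)).det_pos
  have hs : √(pullbackG n q u x).det ≠ 0 := (Real.sqrt_pos.2 hdet).ne'
  set X : Fin n → EuclideanSpace ℝ (Fin n) → ℝ := fun k y =>
    ∑ j, (pullbackG n q u y)⁻¹ k j * fderiv ℝ (f ∘ u) y (EuclideanSpace.single j 1)
  have hX k : DifferentiableAt ℝ (X k) x := by
    have hfu : ContDiffAt ℝ 2 (f ∘ u) x :=
      ContDiffAt.comp x
        (hf.contDiffAt.of_le (WithTop.coe_le_coe.2 (le_top : (2 : ℕ∞) ≤ ⊤))) (hu2 x hx)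
    have hfu' : DifferentiableAt ℝ (fderiv ℝ (f ∘ u)) x :=
      (hfu.fderiv_right (m := 1) (by norm_num)).differentiableAt (by norm_num)
    exact DifferentiableAt.fun_sum fun j _ =>
      (DifferentiableAt.matrix_inv_apply (differentiableAt_pullbackG (hu2 x hx)) hdet.ne' k j).mul
        (hfu'.clm_apply (differentiableAt_const _))
  have hφ a (v : EuclideanSpace ℝ (Fin n)) : fderiv ℝ (fun y => ∑ b : Fin q,
      tangP n q u y b a * fderiv ℝ f (u y) (EuclideanSpace.single b 1)) x v =
      ∑ k, (Dmat n q u x a k * fderiv ℝ (X k) x v +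
        X k x * fderiv ℝ (fun y => Dmat n q u y a k) x v) := by
    have heq : (fun y => ∑ b : Fin q,
        tangP n q u y b a * fderiv ℝ f (u y) (EuclideanSpace.single b 1)) =ᶠ[nhds x]
        fun y => ∑ k, Dmat n q u y a k * X k y := by
      filter_upwards [hΩ.mem_nhds hx] with y hy
      exact sum_tangP_mul_fderiv (hfd _) (hud y hy) a
    rw [heq.fderiv_eq, fderiv_fun_sum fun k _ => (hD a k).fun_mul (hX k)]
    simp [fderiv_fun_mul (hD a _) (hX _)]
  have hrhs : laplaceBeltrami n (pullbackG n q u) (f ∘ u) x =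
      ∑ i, fderiv ℝ (X i) x (EuclideanSpace.single i 1) + ∑ k, X k x * ∑ a, ∑ i,
        (∑ j, (pullbackG n q u x)⁻¹ i j * Dmat n q u x a j) *
          fderiv ℝ (fun y => Dmat n q u y a k) x (EuclideanSpace.single i 1) := by
    have hsd : DifferentiableAt ℝ (fun y => √(pullbackG n q u y).det) x :=
      (DifferentiableAt.matrix_det (differentiableAt_pullbackG (hu2 x hx))).sqrt hdet.ne'
    change (√(pullbackG n q u x).det)⁻¹ * ∑ i, fderiv ℝ
      (fun y => √(pullbackG n q u y).det * X i y) x (EuclideanSpace.single i 1) = _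
    rw [← Finset.sum_add_distrib, Finset.mul_sum]
    refine Finset.sum_congr rfl fun i _ => ?_
    rw [fderiv_fun_mul hsd (hX i), _root_.add_apply, _root_.smul_apply, _root_.smul_apply,
      fderiv_sqrt_det_pullbackG (hu2 x hx) (huimm x hx), smul_eq_mul, smul_eq_mul]
    field_simp
  have hdiag : ∑ i, fderiv ℝ (X i) x (EuclideanSpace.single i 1) = ∑ i, ∑ k,
      (∑ a, (∑ j, (pullbackG n q u x)⁻¹ i j * Dmat n q u x a j) * Dmat n q u x a k) *
        fderiv ℝ (X k) x (EuclideanSpace.single i 1) := by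
    simp [sum_inv_mul_Dmat_mul_Dmat (huimm x hx)]
  rw [hrhs, hdiag]
  generalize hV : (fun i a => ∑ j, (pullbackG n q u x)⁻¹ i j * Dmat n q u x a j) = V
  have hV' i a : ∑ j, (pullbackG n q u x)⁻¹ i j * Dmat n q u x a j = V i a := by rw [← hV]
  simp only [hφ, hV', mul_add, Finset.sum_add_distrib, Finset.mul_sum, Finset.sum_mul]
  congr 1
  · rw [Finset.sum_comm]
    refine Finset.sum_congr rfl fun i _ => ?_
    rw [Finset.sum_comm]
    simp only [mul_assoc]
  · rw [Finset.sum_comm (s := (Finset.univ : Finset (Fin n))) (t := (Finset.univ : Finset (Fin q)))]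
    refine Finset.sum_congr rfl fun a _ => ?_
    rw [Finset.sum_comm]
    simp only [mul_left_comm]
end

section
/- Let g be a C² field and h a continuous field of symmetric positive-definite n×n matrices on ℝ^n, and assume both are uniformly elliptic: there are 0 < λ ≤ Λ with λ|ξ|² ≤ ξᵀg(x)ξ ≤ Λ|ξ|² and λ|ξ|² ≤ ξᵀh(x)ξ ≤ Λ|ξ|² for all x, ξ ∈ ℝ^n. Suppose that for every x ∈ ℝ^n there exists r > 0 such that d_g(x,y) = d_h(x,y) for all y with |y − x| < r. Then g(x) = h(x) for every x ∈ ℝ^n; that is, a continuous Riemannian metric that induces the same local distance function as a C² metric coincides with it. -/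
open Matrix Function MeasureTheory

/-- The Riemannian length `L_g(γ) = ∫₀¹ √(γ'(t)ᵀ g(γ(t)) γ'(t)) dt` of a curve
`γ : [0,1] → ℝ^n` with respect to a matrix field `g`. -/
noncomputable def curveLength (n : ℕ)
    (g : EuclideanSpace ℝ (Fin n) → Matrix (Fin n) (Fin n) ℝ)
    (γ : ℝ → EuclideanSpace ℝ (Fin n)) : ℝ :=
  ∫ t in (0:ℝ)..1,
    Real.sqrt (∑ i : Fin n, ∑ j : Fin n, deriv γ t i * g (γ t) i j * deriv γ t j)

/-- A curve `γ : [0,1] → ℝ^n` is piecewise `C¹`: it is continuous on `[0,1]` and there is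
a partition `0 = t₀ < t₁ < … < t_m = 1` such that `γ` is `C¹` on each `[t_i, t_{i+1}]`. -/
def PiecewiseC1 (n : ℕ) (γ : ℝ → EuclideanSpace ℝ (Fin n)) : Prop :=
  ContinuousOn γ (Set.Icc 0 1) ∧
  ∃ (m : ℕ) (t : Fin (m + 1) → ℝ), StrictMono t ∧ t 0 = 0 ∧ t (Fin.last m) = 1 ∧
    ∀ i : Fin m, ContDiffOn ℝ 1 γ (Set.Icc (t i.castSucc) (t i.succ))

/-- The Riemannian distance `d_g(x,y)`: the infimum of `L_g(γ)` over piecewise `C¹`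
curves from `x` to `y`. -/
noncomputable def riemDist (n : ℕ)
    (g : EuclideanSpace ℝ (Fin n) → Matrix (Fin n) (Fin n) ℝ)
    (x y : EuclideanSpace ℝ (Fin n)) : ℝ :=
  sInf { L : ℝ | ∃ γ : ℝ → EuclideanSpace ℝ (Fin n),
    PiecewiseC1 n γ ∧ γ 0 = x ∧ γ 1 = y ∧ L = curveLength n g γ }

open Topology Filter

section MatrixFields

variable {n : ℕ}

/-- The length `√(wᵀ A w)` of a vector `w` measured by the matrix `A`. -/
noncomputable def matrixNorm (A : Matrix (Fin n) (Fin n) ℝ) (w : EuclideanSpace ℝ (Fin n)) : ℝ :=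
  √(∑ i, ∑ j, w i * A i j * w j)

/-- Uniform ellipticity of a matrix field with constants `lam` and `Lam`. -/
def UniformlyElliptic (lam Lam : ℝ)
    (g : EuclideanSpace ℝ (Fin n) → Matrix (Fin n) (Fin n) ℝ) : Prop :=
  ∀ x, ∀ ξ : Fin n → ℝ,
    lam * ∑ i, ξ i ^ 2 ≤ ∑ i, ∑ j, ξ i * g x i j * ξ j ∧
    ∑ i, ∑ j, ξ i * g x i j * ξ j ≤ Lam * ∑ i, ξ i ^ 2

theorem matrixNorm_nonneg (A : Matrix (Fin n) (Fin n) ℝ) (w : EuclideanSpace ℝ (Fin n)) :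
    0 ≤ matrixNorm A w := Real.sqrt_nonneg _

theorem matrixNorm_smul (A : Matrix (Fin n) (Fin n) ℝ) (w : EuclideanSpace ℝ (Fin n)) {s : ℝ}
    (hs : 0 ≤ s) : matrixNorm A (s • w) = s * matrixNorm A w := by
  have : ∑ i, ∑ j, (s • w) i * A i j * (s • w) j = s ^ 2 * ∑ i, ∑ j, w i * A i j * w j := by
    simp only [Finset.mul_sum, PiLp.smul_apply, smul_eq_mul]
    exact Finset.sum_congr rfl fun i _ => Finset.sum_congr rfl fun j _ => by ring
  rw [matrixNorm, this, Real.sqrt_mul (sq_nonneg s), Real.sqrt_sq hs, matrixNorm]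

theorem continuous_matrixNorm {g : EuclideanSpace ℝ (Fin n) → Matrix (Fin n) (Fin n) ℝ}
    (hg : Continuous (fun x i j => g x i j)) :
    Continuous fun q : EuclideanSpace ℝ (Fin n) × EuclideanSpace ℝ (Fin n) =>
      matrixNorm (g q.1) q.2 := by
  have hij : ∀ i j, Continuous fun x => g x i j := fun i j =>
    (continuous_apply j).comp ((continuous_apply i).comp hg)
  have hw : ∀ i, Continuous fun q : EuclideanSpace ℝ (Fin n) × EuclideanSpace ℝ (Fin n) =>
      q.2 i := fun i => by fun_prop
  exact Real.continuous_sqrt.comp <| continuous_finsetSum _ fun i _ =>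
    continuous_finsetSum _ fun j _ => ((hw i).mul ((hij i j).comp continuous_fst)).mul (hw j)

namespace UniformlyElliptic

variable {lam Lam : ℝ} {g : EuclideanSpace ℝ (Fin n) → Matrix (Fin n) (Fin n) ℝ}

theorem quadratic_nonneg (hell : UniformlyElliptic lam Lam g) (hlam : 0 < lam)
    (x : EuclideanSpace ℝ (Fin n)) (ξ : Fin n → ℝ) : 0 ≤ ∑ i, ∑ j, ξ i * g x i j * ξ j :=
  le_trans (by positivity) (hell x ξ).1

theorem mul_norm_le (hell : UniformlyElliptic lam Lam g) (hlam : 0 < lam)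
    (x w : EuclideanSpace ℝ (Fin n)) : √lam * ‖w‖ ≤ matrixNorm (g x) w := by
  rw [EuclideanSpace.norm_eq, ← Real.sqrt_mul hlam.le]
  simpa [matrixNorm] using Real.sqrt_le_sqrt (hell x w).1

theorem le_mul_norm (hell : UniformlyElliptic lam Lam g) (hLam : 0 ≤ Lam)
    (x w : EuclideanSpace ℝ (Fin n)) : matrixNorm (g x) w ≤ √Lam * ‖w‖ := by
  rw [EuclideanSpace.norm_eq, ← Real.sqrt_mul hLam]
  simpa [matrixNorm] using Real.sqrt_le_sqrt (hell x w).2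

/-- Cauchy–Schwarz for the inner product given by `g x`. -/
theorem bilin_le (hell : UniformlyElliptic lam Lam g) (hlam : 0 < lam)
    (hsymm : ∀ x, (g x).IsSymm) (x v w : EuclideanSpace ℝ (Fin n)) :
    Matrix.toBilin' (g x) v w ≤ matrixNorm (g x) v * matrixNorm (g x) w := by
  have hsq := LinearMap.BilinForm.apply_sq_le_of_symm (Matrix.toBilin' (g x))
    (fun ξ => by rw [Matrix.toBilin'_apply]; exact hell.quadratic_nonneg hlam x ξ)
    (by
      refine ⟨fun ξ η => ?_⟩
      simp only [Matrix.toBilin'_apply, RingHom.id_apply]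
      rw [Finset.sum_comm]
      refine Finset.sum_congr rfl fun i _ => Finset.sum_congr rfl fun j _ => ?_
      rw [(hsymm x).apply i j]; ring) v w
  rw [matrixNorm, matrixNorm, ← Real.sqrt_mul (hell.quadratic_nonneg hlam x v)]
  refine Real.le_sqrt_of_sq_le ?_
  simpa only [Matrix.toBilin'_apply] using hsq

/-- Near `x`, the norms given by `g x` and `g y` agree up to a factor close to `1`. -/
theorem eventually_matrixNorm_le (hell : UniformlyElliptic lam Lam g) (hlam : 0 < lam)
    (hg : Continuous (fun x i j => g x i j)) (x : EuclideanSpace ℝ (Fin n)) {c : ℝ} (hc : 1 < c) :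
    ∀ᶠ y in 𝓝 x, ∀ w, matrixNorm (g x) w ≤ c * matrixNorm (g y) w ∧
      matrixNorm (g y) w ≤ c * matrixNorm (g x) w := by
  set η : ℝ := (c ^ 2 - 1) * lam / (n + 1) with hη
  have hc2 : 0 < c ^ 2 - 1 := by nlinarith
  have hη0 : 0 < η := by positivity
  have hnη : n * η ≤ (c ^ 2 - 1) * lam := by
    rw [hη, mul_div_assoc', div_le_iff₀ (by positivity)]
    nlinarith [mul_pos hc2 hlam]
  filter_upwards [Metric.continuousAt_iff'.1 hg.continuousAt η hη0] with y hy w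
  have hentry : ∀ i j, |g y i j - g x i j| ≤ η := fun i j =>
    ((dist_le_pi_dist (g y i) (g x i) j).trans
      (dist_le_pi_dist (fun i j => g y i j) (fun i j => g x i j) i)).trans hy.le
  have hdiff : |∑ i, ∑ j, w i * g y i j * w j - ∑ i, ∑ j, w i * g x i j * w j| ≤
      (c ^ 2 - 1) * (lam * ∑ i, w i ^ 2) := by
    calc |∑ i, ∑ j, w i * g y i j * w j - ∑ i, ∑ j, w i * g x i j * w j|
        = |∑ i, ∑ j, w i * (g y i j - g x i j) * w j| := by
          simp only [← Finset.sum_sub_distrib]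
          congr 1
          exact Finset.sum_congr rfl fun i _ => Finset.sum_congr rfl fun j _ => by ring
      _ ≤ ∑ i, ∑ j, |w i| * |w j| * η := by
          refine (Finset.abs_sum_le_sum_abs _ _).trans (Finset.sum_le_sum fun i _ => ?_)
          refine (Finset.abs_sum_le_sum_abs _ _).trans (Finset.sum_le_sum fun j _ => ?_)
          rw [abs_mul, abs_mul, mul_right_comm]
          gcongr
          exact hentry i j
      _ = (∑ i, |w i|) ^ 2 * η := by
          rw [sq, Finset.sum_mul_sum, Finset.sum_mul]
          simp only [Finset.sum_mul]
      _ ≤ (n * ∑ i, w i ^ 2) * η := by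
          gcongr
          simpa using sq_sum_le_card_mul_sum_sq (s := Finset.univ) (f := fun i => |w i|)
      _ ≤ (c ^ 2 - 1) * (lam * ∑ i, w i ^ 2) := by
          have : 0 ≤ ∑ i, w i ^ 2 := by positivity
          nlinarith
  have hx := mul_le_mul_of_nonneg_left (hell x w).1 hc2.le
  have hy := mul_le_mul_of_nonneg_left (hell y w).1 hc2.le
  obtain ⟨h₁, h₂⟩ := abs_le.1 hdiff
  have hc0 : 0 ≤ c := by linarith
  constructor
  · rw [matrixNorm, matrixNorm, ← Real.sqrt_sq hc0, ← Real.sqrt_mul (sq_nonneg c)]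
    exact Real.sqrt_le_sqrt (by linarith)
  · rw [matrixNorm, matrixNorm, ← Real.sqrt_sq hc0, ← Real.sqrt_mul (sq_nonneg c)]
    exact Real.sqrt_le_sqrt (by linarith)

end UniformlyElliptic

namespace PiecewiseC1

variable {γ : ℝ → EuclideanSpace ℝ (Fin n)}

/-- A piecewise `C¹` curve is differentiable with bounded derivative off a countable set. -/
theorem exists_countable_deriv_bound (hγ : PiecewiseC1 n γ) :
    ∃ S : Set ℝ, S.Countable ∧ ∃ C : ℝ, ∀ s ∈ Set.Icc (0 : ℝ) 1 \ S,
      DifferentiableAt ℝ γ s ∧ ‖deriv γ s‖ ≤ C := by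
  obtain ⟨-, m, t, ht, ht0, ht1, hC1⟩ := hγ
  have hbound : ∀ i : Fin m, ∃ C, ∀ s ∈ Set.Icc (t i.castSucc) (t i.succ),
      ‖derivWithin γ (Set.Icc (t i.castSucc) (t i.succ)) s‖ ≤ C := fun i =>
    isCompact_Icc.exists_bound_of_continuousOn
      ((hC1 i).continuousOn_derivWithin (uniqueDiffOn_Icc (ht i.castSucc_lt_succ)) le_rfl)
  choose C hC using hbound
  obtain ⟨K, hK⟩ := (Set.finite_range C).bddAbove
  refine ⟨Set.range t, (Set.finite_range t).countable, K, fun s hs => ?_⟩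
  have hne : ∀ i, t i ≠ s := fun i hi => hs.2 ⟨i, hi⟩
  obtain ⟨i, hi⟩ : ∃ i : Fin m, s ∈ Set.Ioo (t i.castSucc) (t i.succ) := by
    by_contra! hcon
    have hlt : ∀ i, t i < s := by
      intro i
      induction i using Fin.induction with
      | zero => exact lt_of_le_of_ne (ht0 ▸ hs.1.1) (hne 0)
      | succ i ih =>
        exact lt_of_le_of_ne (not_lt.1 fun hlt => hcon i ⟨ih, hlt⟩) (hne _)
    exact absurd (hlt (Fin.last m)) (by rw [ht1]; exact not_lt.2 hs.1.2)
  have hnhds := Icc_mem_nhds hi.1 hi.2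
  refine ⟨((hC1 i).differentiableOn one_ne_zero).differentiableAt hnhds, ?_⟩
  rw [← derivWithin_of_mem_nhds hnhds]
  exact (hC i s (Set.Ioo_subset_Icc_self hi)).trans (hK ⟨i, rfl⟩)

theorem ae_deriv_bound (hγ : PiecewiseC1 n γ) :
    ∃ C : ℝ, ∀ᵐ s ∂volume.restrict (Set.Icc (0 : ℝ) 1), ‖deriv γ s‖ ≤ C := by
  obtain ⟨S, hS, C, hC⟩ := hγ.exists_countable_deriv_bound
  refine ⟨C, ?_⟩
  filter_upwards [ae_restrict_mem measurableSet_Icc,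
    ae_restrict_of_ae (hS.ae_notMem volume)] with s hs hsS
  exact (hC s ⟨hs, hsS⟩).2

theorem integrableOn_clm_deriv (hγ : PiecewiseC1 n γ) (p : EuclideanSpace ℝ (Fin n) →L[ℝ] ℝ) :
    IntegrableOn (fun s => p (deriv γ s)) (Set.Icc 0 1) := by
  obtain ⟨C, hC⟩ := hγ.ae_deriv_bound
  refine Measure.integrableOn_of_bounded (M := ‖p‖ * C) (by simp)
    (p.continuous.measurable.comp (measurable_deriv γ)).aestronglyMeasurable ?_
  filter_upwards [hC] with s hs
  exact (p.le_opNorm _).trans (by gcongr)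

theorem integrableOn_matrixNorm (hγ : PiecewiseC1 n γ) {lam Lam : ℝ} (hLam : 0 ≤ Lam)
    {g : EuclideanSpace ℝ (Fin n) → Matrix (Fin n) (Fin n) ℝ}
    (hg : Continuous (fun x i j => g x i j)) (hell : UniformlyElliptic lam Lam g) :
    IntegrableOn (fun s => matrixNorm (g (γ s)) (deriv γ s)) (Set.Icc 0 1) := by
  obtain ⟨C, hC⟩ := hγ.ae_deriv_bound
  have hpair : AEStronglyMeasurable (fun s => (γ s, deriv γ s))
      (volume.restrict (Set.Icc (0 : ℝ) 1)) :=
    (hγ.1.aestronglyMeasurable measurableSet_Icc).prodMk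
      (stronglyMeasurable_deriv γ).aestronglyMeasurable
  have hmeas := (continuous_matrixNorm hg).comp_aestronglyMeasurable hpair
  refine Integrable.of_bound hmeas (√Lam * C) ?_
  filter_upwards [hC] with s hs
  rw [Real.norm_of_nonneg (matrixNorm_nonneg _ _)]
  exact (hell.le_mul_norm hLam _ _).trans (by gcongr)

/-- A linear functional that is dominated along `γ` by `K` times the metric changes by at most
`K` times the length of `γ`. -/
theorem clm_sub_le_mul_curveLength (hγ : PiecewiseC1 n γ) {lam Lam : ℝ} (hLam : 0 ≤ Lam)
    {g : EuclideanSpace ℝ (Fin n) → Matrix (Fin n) (Fin n) ℝ}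
    (hg : Continuous (fun x i j => g x i j)) (hell : UniformlyElliptic lam Lam g)
    (p : EuclideanSpace ℝ (Fin n) →L[ℝ] ℝ) {K s : ℝ} (hK : 0 ≤ K) (hs : s ∈ Set.Icc (0 : ℝ) 1)
    (hp : ∀ t ∈ Set.Icc 0 s, ∀ w, p w ≤ K * matrixNorm (g (γ t)) w) :
    p (γ s) - p (γ 0) ≤ K * curveLength n g γ := by
  obtain ⟨S, hS, C, hC⟩ := hγ.exists_countable_deriv_bound
  have hsub : Set.Icc 0 s ⊆ Set.Icc (0 : ℝ) 1 := Set.Icc_subset_Icc_right hs.2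
  have hint := hγ.integrableOn_matrixNorm hLam hg hell
  have hints : IntervalIntegrable (fun t => matrixNorm (g (γ t)) (deriv γ t)) volume 0 s :=
    (intervalIntegrable_iff_integrableOn_Icc_of_le hs.1).2 (hint.mono_set hsub)
  have hintp : IntervalIntegrable (fun t => p (deriv γ t)) volume 0 s :=
    (intervalIntegrable_iff_integrableOn_Icc_of_le hs.1).2
      ((hγ.integrableOn_clm_deriv p).mono_set hsub)
  calc p (γ s) - p (γ 0) = ∫ t in (0 : ℝ)..s, p (deriv γ t) := by
        refine (integral_eq_of_hasDerivAt_off_countable_of_le (fun t => p (γ t)) _ hs.1 hS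
          (p.continuous.comp_continuousOn (hγ.1.mono hsub)) (fun t ht => ?_) hintp).symm
        exact p.hasFDerivAt.comp_hasDerivAt t
          (hC t ⟨hsub (Set.Ioo_subset_Icc_self ht.1), ht.2⟩).1.hasDerivAt
    _ ≤ ∫ t in (0 : ℝ)..s, K * matrixNorm (g (γ t)) (deriv γ t) :=
        intervalIntegral.integral_mono_on hs.1 hintp (hints.const_mul K)
          fun t ht => hp t ht _
    _ = K * ∫ t in (0 : ℝ)..s, matrixNorm (g (γ t)) (deriv γ t) :=
        intervalIntegral.integral_const_mul _ _
    _ ≤ K * curveLength n g γ := by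
        refine mul_le_mul_of_nonneg_left ?_ hK
        exact intervalIntegral.integral_mono_interval le_rfl hs.1 hs.2
          (Eventually.of_forall fun t => matrixNorm_nonneg _ _)
          ((intervalIntegrable_iff_integrableOn_Icc_of_le zero_le_one).2 hint)

end PiecewiseC1

theorem curveLength_nonneg (g : EuclideanSpace ℝ (Fin n) → Matrix (Fin n) (Fin n) ℝ)
    (γ : ℝ → EuclideanSpace ℝ (Fin n)) : 0 ≤ curveLength n g γ :=
  intervalIntegral.integral_nonneg zero_le_one fun _ _ => Real.sqrt_nonneg _

theorem riemDist_le_curveLength (g : EuclideanSpace ℝ (Fin n) → Matrix (Fin n) (Fin n) ℝ)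
    {γ : ℝ → EuclideanSpace ℝ (Fin n)} (hγ : PiecewiseC1 n γ) :
    riemDist n g (γ 0) (γ 1) ≤ curveLength n g γ :=
  csInf_le ⟨0, by rintro _ ⟨γ, -, -, -, rfl⟩; exact curveLength_nonneg g γ⟩ ⟨γ, hγ, rfl, rfl, rfl⟩

theorem piecewiseC1_segment (x w : EuclideanSpace ℝ (Fin n)) :
    PiecewiseC1 n (fun s : ℝ => x + s • w) := by
  have hsm : ContDiff ℝ 1 (fun s : ℝ => x + s • w) := by fun_prop
  refine ⟨hsm.continuous.continuousOn, 1, fun i => (i : ℝ), fun i j hij => ?_, by simp, by simp,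
    fun i => hsm.contDiffOn⟩
  simpa using hij

theorem le_riemDist {g : EuclideanSpace ℝ (Fin n) → Matrix (Fin n) (Fin n) ℝ}
    {x y : EuclideanSpace ℝ (Fin n)} {a : ℝ}
    (ha : ∀ γ, PiecewiseC1 n γ → γ 0 = x → γ 1 = y → a ≤ curveLength n g γ) :
    a ≤ riemDist n g x y :=
  le_csInf ⟨_, _, piecewiseC1_segment x (y - x), by simp, by simp, rfl⟩
    (by rintro _ ⟨γ, hγ, h0, h1, rfl⟩; exact ha γ hγ h0 h1)

section Infinitesimal

variable {lam Lam : ℝ} {g : EuclideanSpace ℝ (Fin n) → Matrix (Fin n) (Fin n) ℝ}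

theorem eventually_riemDist_le (hlam : 0 < lam) (hg : Continuous (fun x i j => g x i j))
    (hell : UniformlyElliptic lam Lam g) (x v : EuclideanSpace ℝ (Fin n)) {c : ℝ} (hc : 1 < c) :
    ∀ᶠ s : ℝ in 𝓝[>] 0, riemDist n g x (x + s • v) ≤ c * (s * matrixNorm (g x) v) := by
  obtain ⟨δ, hδ, hball⟩ := Metric.eventually_nhds_iff_ball.1
    (hell.eventually_matrixNorm_le hlam hg x hc)
  have hsmall : ∀ᶠ s : ℝ in 𝓝 0, ‖s • v‖ < δ :=
    (Continuous.tendsto' (by fun_prop) (0 : ℝ) 0 (by simp)).eventually_lt_const hδ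
  filter_upwards [nhdsWithin_le_nhds hsmall, self_mem_nhdsWithin] with s hs hs0
  have hs0 : 0 < s := hs0
  have hle := riemDist_le_curveLength g (piecewiseC1_segment x (s • v))
  simp only [zero_smul, add_zero, one_smul] at hle
  refine hle.trans ?_
  have hderiv : ∀ t : ℝ, deriv (fun t : ℝ => x + t • s • v) t = s • v := fun t => by
    simpa using (((hasDerivAt_id t).smul_const (s • v)).const_add x).deriv
  have hnorm : ‖curveLength n g (fun t : ℝ => x + t • s • v)‖ ≤
      c * (s * matrixNorm (g x) v) * |1 - 0| := by
    refine intervalIntegral.norm_integral_le_of_norm_le_const fun t ht => ?_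
    rw [Set.uIoc_of_le zero_le_one] at ht
    rw [Real.norm_of_nonneg (Real.sqrt_nonneg _), hderiv t, ← matrixNorm_smul _ _ hs0.le]
    refine (hball _ ?_ (s • v)).2
    rw [mem_ball_iff_norm, add_sub_cancel_left, norm_smul, Real.norm_of_nonneg ht.1.le]
    exact (mul_le_of_le_one_left (norm_nonneg _) ht.2).trans_lt hs
  simpa using (le_abs_self _).trans hnorm

theorem eventually_le_riemDist (hlam : 0 < lam) (hLam : 0 ≤ Lam)
    (hg : Continuous (fun x i j => g x i j)) (hsymm : ∀ x, (g x).IsSymm)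
    (hell : UniformlyElliptic lam Lam g) (x v : EuclideanSpace ℝ (Fin n)) {c : ℝ} (hc : 1 < c) :
    ∀ᶠ s : ℝ in 𝓝[>] 0, s * matrixNorm (g x) v ≤ c * riemDist n g x (x + s • v) := by
  obtain ⟨δ, hδ, hball⟩ := Metric.eventually_nhds_iff_ball.1
    (hell.eventually_matrixNorm_le hlam hg x hc)
  have hlam' : 0 < √lam := Real.sqrt_pos.2 hlam
  have hsmall : ∀ᶠ s : ℝ in 𝓝 0, s * matrixNorm (g x) v < √lam * δ :=
    (Continuous.tendsto' (by fun_prop) (0 : ℝ) 0 (by simp)).eventually_lt_const (by positivity)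
  have hc0 : 0 < c := by linarith
  filter_upwards [nhdsWithin_le_nhds hsmall, self_mem_nhdsWithin] with s hs hs0
  have hs0 : 0 < s := hs0
  rw [← div_le_iff₀' hc0]
  refine le_riemDist fun γ hγ h0 h1 => ?_
  rw [div_le_iff₀' hc0]
  by_cases hin : ∀ t ∈ Set.Icc (0 : ℝ) 1, γ t ∈ Metric.ball x δ
  · rcases (matrixNorm_nonneg (g x) v).eq_or_lt with hv | hv
    · rw [← hv, mul_zero]
      exact mul_nonneg hc0.le (curveLength_nonneg g γ)
    let p : EuclideanSpace ℝ (Fin n) →L[ℝ] ℝ := LinearMap.toContinuousLinearMap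
      ((Matrix.toBilin' (g x) v).comp (EuclideanSpace.equiv (Fin n) ℝ).toLinearMap)
    have hpw : ∀ w, p w = Matrix.toBilin' (g x) v w := fun w => rfl
    have hle := hγ.clm_sub_le_mul_curveLength hLam hg hell p
      (K := matrixNorm (g x) v * c) (s := 1) (by positivity) (by simp) fun t ht w => by
        rw [hpw, mul_assoc]
        exact (hell.bilin_le hlam hsymm x v w).trans
          (mul_le_mul_of_nonneg_left (hball _ (hin t ht) w).1 hv.le)
    have hpv : p v = matrixNorm (g x) v * matrixNorm (g x) v := by
      rw [hpw, Matrix.toBilin'_apply, matrixNorm,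
        Real.mul_self_sqrt (hell.quadratic_nonneg hlam x v)]
    rw [h0, h1, map_add, map_smul, add_sub_cancel_left, hpv, smul_eq_mul, mul_left_comm,
      mul_assoc] at hle
    exact le_of_mul_le_mul_left hle hv
  · push Not at hin
    obtain ⟨t, ht, htx⟩ := hin
    rw [mem_ball_iff_norm, not_lt] at htx
    have hpos : 0 < ‖γ t - x‖ := hδ.trans_le htx
    have hle := hγ.clm_sub_le_mul_curveLength hLam hg hell (innerSL ℝ (γ t - x))
      (K := ‖γ t - x‖ / √lam) (by positivity) ht fun r _ w => by
        rw [innerSL_apply_apply, div_mul_eq_mul_div, le_div_iff₀ hlam']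
        refine (mul_le_mul_of_nonneg_right (real_inner_le_norm _ _) hlam'.le).trans ?_
        rw [mul_assoc, mul_comm ‖w‖]
        exact mul_le_mul_of_nonneg_left (hell.mul_norm_le hlam _ w) hpos.le
    rw [h0, ← map_sub, innerSL_apply_apply, real_inner_self_eq_norm_mul_norm,
      div_mul_eq_mul_div, mul_div_assoc] at hle
    have hlen := le_of_mul_le_mul_left hle hpos
    rw [le_div_iff₀' hlam'] at hlen
    have := mul_le_mul_of_nonneg_left htx hlam'.le
    nlinarith [curveLength_nonneg g γ]

/-- If the distances of two metrics from `x` agree near `x`, then the norm of the first metric at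
`x` is at most that of the second. -/
theorem matrixNorm_le_of_riemDist_eq {h : EuclideanSpace ℝ (Fin n) → Matrix (Fin n) (Fin n) ℝ}
    (hlam : 0 < lam) (hLam : 0 ≤ Lam)
    (hg : Continuous (fun x i j => g x i j)) (hh : Continuous (fun x i j => h x i j))
    (hsymm : ∀ x, (g x).IsSymm) (hgell : UniformlyElliptic lam Lam g)
    (hhell : UniformlyElliptic lam Lam h) {x : EuclideanSpace ℝ (Fin n)}
    (hdist : ∀ᶠ y in 𝓝 x, riemDist n g x y = riemDist n h x y) (v : EuclideanSpace ℝ (Fin n)) :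
    matrixNorm (g x) v ≤ matrixNorm (h x) v := by
  have hmul : ∀ c : ℝ, 1 < c → matrixNorm (g x) v ≤ c * (c * matrixNorm (h x) v) := by
    intro c hc
    have hlim : Tendsto (fun s : ℝ => x + s • v) (𝓝[>] 0) (𝓝 x) :=
      (Continuous.tendsto' (by fun_prop) (0 : ℝ) x (by simp)).mono_left nhdsWithin_le_nhds
    obtain ⟨s, hlow, hup, heq, hs⟩ := ((eventually_le_riemDist hlam hLam hg hsymm hgell x v hc).and
      ((eventually_riemDist_le hlam hh hhell x v hc).and
        ((hlim.eventually hdist).and self_mem_nhdsWithin))).exists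
    have hs : 0 < s := hs
    rw [heq] at hlow
    have := hlow.trans (mul_le_mul_of_nonneg_left hup (by linarith))
    refine le_of_mul_le_mul_left (this.trans_eq ?_) hs
    ring
  have hlim : Tendsto (fun c : ℝ => c * (c * matrixNorm (h x) v)) (𝓝[>] 1)
      (𝓝 (matrixNorm (h x) v)) :=
    (Continuous.tendsto' (by fun_prop) (1 : ℝ) _ (by simp)).mono_left nhdsWithin_le_nhds
  exact ge_of_tendsto hlim (eventually_mem_nhdsWithin.mono hmul)

end Infinitesimal

/-- Symmetric matrices with the same quadratic form are equal. -/
theorem Matrix.IsSymm.eq_of_quadratic_eq {A B : Matrix (Fin n) (Fin n) ℝ} (hA : A.IsSymm)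
    (hB : B.IsSymm)
    (hAB : ∀ ξ : Fin n → ℝ, ∑ i, ∑ j, ξ i * A i j * ξ j = ∑ i, ∑ j, ξ i * B i j * ξ j) :
    A = B := by
  have hq : ∀ ξ, Matrix.toBilin' A ξ ξ = Matrix.toBilin' B ξ ξ := fun ξ => by
    simpa only [Matrix.toBilin'_apply] using hAB ξ
  ext i j
  have hi := hq (Pi.single i 1)
  have hj := hq (Pi.single j 1)
  have hij := hq (Pi.single i 1 + Pi.single j 1)
  simp only [map_add, LinearMap.add_apply, Matrix.toBilin'_single] at hi hj hij
  rw [hA.apply i j, hB.apply i j] at hij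
  linarith

end MatrixFields

/-- a continuous uniformly elliptic Riemannian metric `h` on `ℝ^n` which
induces the same local distance function as a `C²` uniformly elliptic metric `g`
coincides with `g`. -/
theorem metric_determined_by_local_distances
    (n : ℕ) (hn : 1 ≤ n) (lam Lam : ℝ) (hlam : 0 < lam) (hlamLam : lam ≤ Lam)
    (g h : EuclideanSpace ℝ (Fin n) → Matrix (Fin n) (Fin n) ℝ)
    (hg : ContDiff ℝ 2 (fun x i j => g x i j))
    (hh : Continuous (fun x i j => h x i j))
    (hgsymm : ∀ x, (g x).IsSymm) (hhsymm : ∀ x, (h x).IsSymm)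
    (hgell : ∀ x, ∀ ξ : Fin n → ℝ,
      lam * ∑ i, ξ i ^ 2 ≤ ∑ i, ∑ j, ξ i * g x i j * ξ j ∧
      ∑ i, ∑ j, ξ i * g x i j * ξ j ≤ Lam * ∑ i, ξ i ^ 2)
    (hhell : ∀ x, ∀ ξ : Fin n → ℝ,
      lam * ∑ i, ξ i ^ 2 ≤ ∑ i, ∑ j, ξ i * h x i j * ξ j ∧
      ∑ i, ∑ j, ξ i * h x i j * ξ j ≤ Lam * ∑ i, ξ i ^ 2)
    (hdist : ∀ x, ∃ r : ℝ, 0 < r ∧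
      ∀ y, ‖y - x‖ < r → riemDist n g x y = riemDist n h x y) :
    ∀ x, g x = h x := by
  have hLam : 0 ≤ Lam := hlam.le.trans hlamLam
  have hgell' : UniformlyElliptic lam Lam g := hgell
  have hhell' : UniformlyElliptic lam Lam h := hhell
  intro x
  obtain ⟨r, hr, hxr⟩ := hdist x
  have hloc : ∀ᶠ y in 𝓝 x, riemDist n g x y = riemDist n h x y :=
    Metric.eventually_nhds_iff_ball.2 ⟨r, hr, fun y hy => hxr y (mem_ball_iff_norm.1 hy)⟩
  refine (hgsymm x).eq_of_quadratic_eq (hhsymm x) fun ξ => ?_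
  have heq := le_antisymm
    (matrixNorm_le_of_riemDist_eq hlam hLam hg.continuous hh hgsymm hgell' hhell' hloc
      (WithLp.toLp 2 ξ))
    (matrixNorm_le_of_riemDist_eq hlam hLam hh hg.continuous hhsymm hhell' hgell'
      (hloc.mono fun _ => Eq.symm) (WithLp.toLp 2 ξ))
  exact (Real.sqrt_inj (hgell'.quadratic_nonneg hlam x ξ) (hhell'.quadratic_nonneg hlam x ξ)).1 heq
end
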